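/- arXiv:1507.00670 — 8 statements merged into one kernel-verified Lean document; each statement's English description precedes it below -/
import Mathlib

section
/- (Móricz) Let (c_n)_{n∈ℤ} be complex numbers such that sup_{N ≥ 1} ( N ∑_{|n| ≥ N} |c_n| ) < ∞. Then the function φ(θ) = ∑_{n∈ℤ} c_n e^{2πi n θ} is a continuous 1-periodic function belonging to the Zygmund class Λ_*(1), i.e. there exists a constant C > 0 such that |φ(x+h) − 2φ(x) + φ(x−h)| ≤ C h for all x ∈ ℝ and all h > 0. -/
open MeasureTheory Complex Real ENNReal

/-!
The second difference of the `n`-th character with step `h` has modulus at most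
`min (4, (2πnh)²)`, so the second difference of `φ` is bounded by
`∑ₙ |cₙ| min (4, (2πnh)²)`. Let `T k = ∑_{|n| ≥ k} |cₙ|`, which satisfies `k T k ≤ C`, and split
this series at `N = ⌊1/h⌋ + 1`. The part `|n| ≥ N` contributes at most `4 T N ≤ 4 C / N ≤ 4 C h`.
On the part `|n| < N`, summation by parts in the form `n² ≤ ∑_{k=1}^{|n|} 2k` gives
`∑_{|n| < N} n² |cₙ| ≤ ∑_{k=1}^{N-1} 2 k T k ≤ 2 C (N - 1) ≤ 2 C / h`, a contribution of at most
`8 π² C h`. Continuity and periodicity follow from the absolute convergence of the series.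
-/

lemma tail_bounds {c : ℤ → ℂ} {C : ℝ}
    (hC : ∀ N : ℕ, 1 ≤ N →
      (N : ℝ≥0∞) * ∑' n : {n : ℤ // (N : ℤ) ≤ |n|}, ENNReal.ofReal ‖c n‖
        ≤ ENNReal.ofReal C) :
    Summable (fun n => ‖c n‖) ∧ ∀ N : ℕ, 1 ≤ N →
      (N : ℝ) * ∑' n : ℤ, {n : ℤ | (N : ℤ) ≤ |n|}.indicator (fun n => ‖c n‖) n ≤ max C 0 := by
  have hs : Summable (fun n => ‖c n‖) := by
    have h1 := hC 1 le_rfl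
    rw [Nat.cast_one, one_mul] at h1
    have h2 : Summable (fun n : {n : ℤ // ((1 : ℕ) : ℤ) ≤ |n|} => ‖c n‖) := by
      have := ENNReal.summable_toReal (ne_top_of_le_ne_top ENNReal.ofReal_ne_top h1)
      simpa using this
    have h3 : Summable ({n : ℤ | ((1 : ℕ) : ℤ) ≤ |n|}.indicator (fun n => ‖c n‖)) :=
      summable_subtype_iff_indicator.mp h2
    refine h3.congr_cofinite ?_
    filter_upwards [(Set.finite_singleton (0 : ℤ)).compl_mem_cofinite] with n hn
    rw [Set.indicator_of_mem]
    exact Int.one_le_abs hn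
  refine ⟨hs, fun N hN => ?_⟩
  have h := hC N hN
  have hsub : Summable (fun n : {n : ℤ // (N : ℤ) ≤ |n|} => ‖c n‖) := hs.subtype _
  rw [← ENNReal.ofReal_tsum_of_nonneg (fun _ => norm_nonneg _) hsub, ← ENNReal.ofReal_natCast,
    ← ENNReal.ofReal_mul (Nat.cast_nonneg N)] at h
  rw [← tsum_subtype]
  exact (ENNReal.ofReal_le_ofReal_iff (le_max_right C 0)).mp
    (h.trans (ENNReal.ofReal_le_ofReal (le_max_left C 0)))

lemma norm_exp_two_pi_mul (n : ℤ) (x : ℝ) :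
    ‖Complex.exp (2 * Real.pi * Complex.I * n * x)‖ = 1 := by
  have : (2 * Real.pi * Complex.I * n * x : ℂ) = ((2 * Real.pi * n * x : ℝ) : ℂ) * Complex.I := by
    push_cast; ring
  rw [this, Complex.norm_exp_ofReal_mul_I]

lemma norm_second_diff_exp (n : ℤ) (x h : ℝ) :
    ‖Complex.exp (2 * Real.pi * Complex.I * n * (x + h : ℝ))
      - 2 * Complex.exp (2 * Real.pi * Complex.I * n * x)
      + Complex.exp (2 * Real.pi * Complex.I * n * (x - h : ℝ))‖
      = 2 * (1 - Real.cos (2 * Real.pi * n * h)) := by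
  have key : Complex.exp (2 * Real.pi * Complex.I * n * (x + h : ℝ))
      - 2 * Complex.exp (2 * Real.pi * Complex.I * n * x)
      + Complex.exp (2 * Real.pi * Complex.I * n * (x - h : ℝ))
      = Complex.exp (2 * Real.pi * Complex.I * n * x) *
        ((-(2 * (1 - Real.cos (2 * Real.pi * n * h))) : ℝ) : ℂ) := by
    have e1 : (2 * Real.pi * Complex.I * n * (x + h : ℝ) : ℂ)
        = 2 * Real.pi * Complex.I * n * x + (2 * Real.pi * n * h) * Complex.I := by
      push_cast; ring
    have e2 : (2 * Real.pi * Complex.I * n * (x - h : ℝ) : ℂ)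
        = 2 * Real.pi * Complex.I * n * x + -(2 * Real.pi * n * h) * Complex.I := by
      push_cast; ring
    rw [e1, e2, Complex.exp_add, Complex.exp_add]
    push_cast
    rw [Complex.cos]
    ring
  rw [key, norm_mul, norm_exp_two_pi_mul, one_mul, Complex.norm_real, norm_neg, Real.norm_of_nonneg]
  linarith [Real.cos_le_one (2 * Real.pi * n * h)]

lemma sq_le_sum_two_mul (m : ℕ) : (m : ℝ) ^ 2 ≤ ∑ k ∈ Finset.Icc 1 m, 2 * (k : ℝ) := by
  induction m with
  | zero => simp
  | succ m ih =>
    rw [Finset.sum_Icc_succ_top (by omega)]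
    push_cast
    nlinarith

/-- The bounds `(2πnh)²` for `|n| ≤ M` and `4` for `|n| > M` on the modulus of the second
difference, expanded over the layers `{|n| ≥ k}`, `k ≤ M + 1`, by `sq_le_sum_two_mul`. They are
stated multiplied by a weight `f n ≥ 0`, so that summing over `n` turns each layer into a tail
of `∑ f`. -/
lemma weight_le (f : ℤ → ℝ) (hf : ∀ n, 0 ≤ f n) (h : ℝ) (M : ℕ) (n : ℤ) :
    f n * (2 * (1 - Real.cos (2 * Real.pi * n * h))) ≤
      ∑ k ∈ Finset.Icc 1 M,
          ((2 * Real.pi * h) ^ 2 * (2 * k)) * {n : ℤ | (k : ℤ) ≤ |n|}.indicator f n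
        + 4 * {n : ℤ | ((M + 1 : ℕ) : ℤ) ≤ |n|}.indicator f n := by
  have hnn : ∀ k : ℕ, 0 ≤ {n : ℤ | (k : ℤ) ≤ |n|}.indicator f n :=
    fun k => Set.indicator_nonneg (fun n _ => hf n) n
  by_cases hn : ((M + 1 : ℕ) : ℤ) ≤ |n|
  · have h1 : {n : ℤ | ((M + 1 : ℕ) : ℤ) ≤ |n|}.indicator f n = f n :=
      Set.indicator_of_mem (s := {n : ℤ | ((M + 1 : ℕ) : ℤ) ≤ |n|}) hn f
    rw [h1]
    have h2 : 0 ≤ ∑ k ∈ Finset.Icc 1 M,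
        ((2 * Real.pi * h) ^ 2 * (2 * k)) * {n : ℤ | (k : ℤ) ≤ |n|}.indicator f n :=
      Finset.sum_nonneg fun k _ => mul_nonneg (by positivity) (hnn k)
    nlinarith [hf n, Real.neg_one_le_cos (2 * Real.pi * n * h)]
  · have hm : n.natAbs ≤ M := by
      rw [Int.abs_eq_natAbs] at hn
      omega
    have h1 : 2 * (1 - Real.cos (2 * Real.pi * n * h))
        ≤ (2 * Real.pi * h) ^ 2 * (n.natAbs : ℝ) ^ 2 := by
      have := Real.one_sub_sq_div_two_le_cos (x := 2 * Real.pi * n * h)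
      have e : (n.natAbs : ℝ) ^ 2 = (n : ℝ) ^ 2 := by
        rw [Nat.cast_natAbs, Int.cast_abs, sq_abs]
      rw [e]
      linear_combination 2 * this
    calc f n * (2 * (1 - Real.cos (2 * Real.pi * n * h)))
        ≤ f n * ((2 * Real.pi * h) ^ 2 * ∑ k ∈ Finset.Icc 1 n.natAbs, 2 * (k : ℝ)) := by
          refine mul_le_mul_of_nonneg_left (h1.trans ?_) (hf n)
          exact mul_le_mul_of_nonneg_left (sq_le_sum_two_mul _) (by positivity)
      _ = ∑ k ∈ Finset.Icc 1 n.natAbs,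
            ((2 * Real.pi * h) ^ 2 * (2 * k)) * {n : ℤ | (k : ℤ) ≤ |n|}.indicator f n := by
          rw [Finset.mul_sum, Finset.mul_sum]
          refine Finset.sum_congr rfl fun k hk => ?_
          have hk' : (k : ℤ) ≤ |n| := by
            have := (Finset.mem_Icc.mp hk).2
            rw [Int.abs_eq_natAbs]
            omega
          rw [Set.indicator_of_mem (s := {n : ℤ | (k : ℤ) ≤ |n|}) hk' f]
          ring
      _ ≤ ∑ k ∈ Finset.Icc 1 M,
            ((2 * Real.pi * h) ^ 2 * (2 * k)) * {n : ℤ | (k : ℤ) ≤ |n|}.indicator f n :=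
          Finset.sum_le_sum_of_subset_of_nonneg (Finset.Icc_subset_Icc le_rfl hm)
            fun k _ _ => mul_nonneg (by positivity) (hnn k)
      _ ≤ _ := le_add_of_nonneg_right (mul_nonneg (by norm_num) (hnn _))

/-- (Móricz) If complex numbers `(c_n)_{n∈ℤ}` satisfy `sup_{N≥1} N ∑_{|n|≥N} |c_n| < ∞`, then
`φ(θ) = ∑_n c_n e^{2πinθ}` is a continuous `1`-periodic function in the Zygmund class
`Λ_*(1)`: there is `C > 0` with `|φ(x+h) − 2φ(x) + φ(x−h)| ≤ C h` for all `x ∈ ℝ`, `h > 0`. -/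
theorem moricz_zygmund
    (c : ℤ → ℂ)
    (hsup : ∃ C : ℝ, ∀ N : ℕ, 1 ≤ N →
      (N : ℝ≥0∞) * ∑' n : {n : ℤ // (N : ℤ) ≤ |n|}, ENNReal.ofReal ‖c n‖
        ≤ ENNReal.ofReal C)
    (φ : ℝ → ℂ)
    (hφ : ∀ x : ℝ, φ x = ∑' n : ℤ, c n * Complex.exp (2 * Real.pi * Complex.I * n * x)) :
    Continuous φ ∧ (∀ x : ℝ, φ (x + 1) = φ x) ∧
      ∃ C : ℝ, 0 < C ∧ ∀ x h : ℝ, 0 < h →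
        ‖φ (x + h) - 2 * φ x + φ (x - h)‖ ≤ C * h := by
  obtain ⟨C₀, hC₀⟩ := hsup
  obtain ⟨hs, hT⟩ := tail_bounds hC₀
  set C : ℝ := max C₀ 0
  have hC : 0 ≤ C := le_max_right _ _
  have hnorm : ∀ (x : ℝ) (n : ℤ),
      ‖c n * Complex.exp (2 * Real.pi * Complex.I * n * x)‖ = ‖c n‖ := fun x n => by
    rw [norm_mul, norm_exp_two_pi_mul, mul_one]
  have hsum : ∀ x : ℝ,
      Summable fun n : ℤ => c n * Complex.exp (2 * Real.pi * Complex.I * n * x) := fun x =>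
    Summable.of_norm (by simpa only [hnorm] using hs)
  refine ⟨?_, ?_, ?_⟩
  · rw [funext hφ]
    exact continuous_tsum (fun n => by fun_prop) hs (fun n x => (hnorm x n).le)
  · intro x
    rw [hφ, hφ]
    refine tsum_congr fun n => ?_
    have e : (2 * Real.pi * Complex.I * n * (x + 1 : ℝ) : ℂ)
        = 2 * Real.pi * Complex.I * n * x + n * (2 * Real.pi * Complex.I) := by
      push_cast; ring
    rw [e, Complex.exp_add, Complex.exp_int_mul_two_pi_mul_I, mul_one]
  · refine ⟨8 * Real.pi ^ 2 * C + 4 * C + 1, by positivity, fun x h hh => ?_⟩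
    -- `M = N - 1` is the largest frequency for which the quadratic bound is used.
    set M : ℕ := ⌊1 / h⌋₊
    have hM1 : (M : ℝ) ≤ 1 / h := Nat.floor_le (by positivity)
    have hM2 : 1 / h < (M : ℝ) + 1 := Nat.lt_floor_add_one _
    set f : ℤ → ℝ := fun n => ‖c n‖
    set T : ℕ → ℝ := fun k => ∑' n : ℤ, {n : ℤ | (k : ℤ) ≤ |n|}.indicator f n
    have hind : ∀ k : ℕ, Summable fun n : ℤ => {n : ℤ | (k : ℤ) ≤ |n|}.indicator f n :=
      fun k => hs.indicator _
    have hrhs : HasSum (fun n : ℤ => ∑ k ∈ Finset.Icc 1 M,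
          ((2 * Real.pi * h) ^ 2 * (2 * k)) * {n : ℤ | (k : ℤ) ≤ |n|}.indicator f n
        + 4 * {n : ℤ | ((M + 1 : ℕ) : ℤ) ≤ |n|}.indicator f n)
        (∑ k ∈ Finset.Icc 1 M, ((2 * Real.pi * h) ^ 2 * (2 * k)) * T k + 4 * T (M + 1)) :=
      (hasSum_sum fun k _ => (hind k).hasSum.mul_left _).add ((hind (M + 1)).hasSum.mul_left 4)
    have hdiff := (((hsum (x + h)).hasSum.sub ((hsum x).hasSum.mul_left 2)).add
      (hsum (x - h)).hasSum)
    rw [← hφ, ← hφ, ← hφ] at hdiff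
    have hmain : ‖φ (x + h) - 2 * φ x + φ (x - h)‖
        ≤ ∑ k ∈ Finset.Icc 1 M, ((2 * Real.pi * h) ^ 2 * (2 * k)) * T k + 4 * T (M + 1) := by
      rw [← hdiff.tsum_eq]
      refine tsum_of_norm_bounded hrhs fun n => ?_
      refine le_trans (le_of_eq ?_) (weight_le f (fun n => norm_nonneg _) h M n)
      rw [← norm_second_diff_exp n x h, ← norm_mul]
      congr 1
      ring
    have hhead : ∑ k ∈ Finset.Icc 1 M, ((2 * Real.pi * h) ^ 2 * (2 * k)) * T k
        ≤ 8 * Real.pi ^ 2 * C * h := by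
      calc _ ≤ ∑ k ∈ Finset.Icc 1 M, (2 * Real.pi * h) ^ 2 * 2 * C := by
            refine Finset.sum_le_sum fun k hk => ?_
            have := mul_le_mul_of_nonneg_left (hT k (Finset.mem_Icc.mp hk).1)
              (show 0 ≤ (2 * Real.pi * h) ^ 2 * 2 by positivity)
            calc _ = (2 * Real.pi * h) ^ 2 * 2 * (k * T k) := by ring
              _ ≤ _ := this
        _ = 8 * Real.pi ^ 2 * C * h * (M * h) := by
            rw [Finset.sum_const, Nat.card_Icc, nsmul_eq_mul, Nat.add_sub_cancel]
            ring
        _ ≤ 8 * Real.pi ^ 2 * C * h * 1 :=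
            mul_le_mul_of_nonneg_left ((le_div_iff₀ hh).mp hM1) (by positivity)
        _ = _ := mul_one _
    have htail : T (M + 1) ≤ C * h := by
      have h1 : ((M + 1 : ℕ) : ℝ) * T (M + 1) ≤ C := hT (M + 1) (by omega)
      push_cast at h1
      have h2 : 1 < ((M : ℝ) + 1) * h := (div_lt_iff₀ hh).mp hM2
      have h3 : 0 ≤ T (M + 1) :=
        tsum_nonneg fun n => Set.indicator_nonneg (fun n _ => norm_nonneg _) n
      nlinarith [mul_le_mul_of_nonneg_right h1 hh.le, mul_le_mul_of_nonneg_right h2.le h3]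
    nlinarith
end

section
/- (Fülöp–Móricz) Let (c_{jk})_{j,k∈ℤ} be complex numbers such that sup_{N ≥ 1, M ≥ 1} ( N M ∑_{|j| ≥ N, |k| ≥ M} |c_{jk}| ) < ∞. Then the function φ(θ_1, θ_2) = ∑_{j,k∈ℤ} c_{jk} e^{2πi (jθ_1 + kθ_2)} belongs to the multiple Zygmund class Λ_*(1,1), i.e. there exists a constant C > 0 such that |Δ_{2,2}φ(x_1, x_2; h_1, h_2)| ≤ C h_1 h_2 for all x_1, x_2 ∈ ℝ and all h_1, h_2 > 0. -/
open MeasureTheory Complex Real ENNReal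

/-!
Acting termwise, the double second difference multiplies the `(j, k)` term of the series by
`(2 cos (2π j h₁) - 2) (2 cos (2π k h₂) - 2)`, so it suffices to bound
`∑ |c_{jk}| min(1, (j h₁)²) min(1, (k h₂)²)` by a multiple of `h₁ h₂`. With `n = ⌈1/h⌉`, each
multiplier is at most a constant times `(min |j| n / n)²` (`norm_multiplier_le`), and
`(min |j| n)² = ∑_{N < n, N + 1 ≤ |j|} (2 N + 1)` (`sq_min_eq_sum`). Exchanging the order of
summation turns the bound into a weighted sum of the tails
`T(N + 1, M + 1) = ∑_{|j| ≥ N + 1, |k| ≥ M + 1} |c_{jk}|`. By hypothesis these are at most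
`C / ((N + 1) (M + 1))`, which reduces the weights `2 N + 1` to at most `2`; what remains is
`O(n m / (n² m²)) = O(h₁ h₂)`.
-/

/-- Discrete layer-cake formula: the square of the truncation of `a` at `n` as a combination of
the indicators of `N + 1 ≤ a`. -/
lemma sq_min_eq_sum (a n : ℕ) :
    ((min a n : ℕ) : ℝ) ^ 2 = ∑ N ∈ Finset.range n, if N + 1 ≤ a then (2 * N + 1 : ℝ) else 0 := by
  induction n with
  | zero => simp
  | succ n ih =>
    rw [Finset.sum_range_succ, ← ih]
    split_ifs with h
    · rw [min_eq_right h, min_eq_right (by omega)]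
      push_cast
      ring
    · rw [min_eq_left (by omega), min_eq_left (by omega)]
      ring

/-- The Fourier multiplier of a second difference with step `h` is bounded by the truncated
square `(min |j| n / n)²` at a level `n` comparable to `max(1, 1/h)`. -/
lemma norm_multiplier_le (h : ℝ) (hh : 0 < h) :
    ∃ n : ℕ, 0 < n ∧ 1 / (n : ℝ) ≤ h ∧ ∀ j : ℤ,
      ‖Complex.exp (2 * Real.pi * Complex.I * (j * h)) +
        Complex.exp (-(2 * Real.pi * Complex.I * (j * h))) - 2‖ ≤
        16 * Real.pi ^ 2 / (n : ℝ) ^ 2 * ((min j.natAbs n : ℕ) : ℝ) ^ 2 := by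
  have hn0 : 0 < ⌈1 / h⌉₊ := Nat.ceil_pos.2 (by positivity)
  have hn1 : 1 / h ≤ (⌈1 / h⌉₊ : ℝ) := Nat.le_ceil _
  have hn2 : (⌈1 / h⌉₊ : ℝ) < 1 / h + 1 := Nat.ceil_lt_add_one (by positivity)
  generalize ⌈1 / h⌉₊ = n at hn0 hn1 hn2
  have hnR : (0 : ℝ) < n := by exact_mod_cast hn0
  refine ⟨n, hn0, ?_, fun j => ?_⟩
  · rwa [one_div_le hnR hh]
  have key : Complex.exp (2 * Real.pi * Complex.I * (j * h)) +
      Complex.exp (-(2 * Real.pi * Complex.I * (j * h))) - 2 =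
      ((2 * Real.cos (2 * Real.pi * (j * h)) - 2 : ℝ) : ℂ) := by
    push_cast
    rw [Complex.two_cos]
    congr 3 <;> ring
  rw [key, Complex.norm_real, Real.norm_eq_abs,
    abs_of_nonpos (by linarith [Real.cos_le_one (2 * Real.pi * (j * h))])]
  have hcos1 := Real.neg_one_le_cos (2 * Real.pi * (j * h))
  have hcos2 := Real.one_sub_sq_div_two_le_cos (x := 2 * Real.pi * (j * h))
  have hpi := Real.pi_gt_three
  rcases le_or_gt n j.natAbs with hj | hj
  · rw [min_eq_right hj, div_mul_cancel₀ _ (by positivity)]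
    nlinarith
  · rw [min_eq_left hj.le]
    have hjsq : ((j.natAbs : ℕ) : ℝ) ^ 2 = (j : ℝ) ^ 2 := by
      rw [Nat.cast_natAbs, Int.cast_abs, sq_abs]
    rw [hjsq]
    rcases eq_or_ne j 0 with rfl | hj0
    · simp
    -- Here `1 ≤ |j| < n`, so `n ≥ 2` and hence `n ≤ 2 (n - 1) < 2 / h`.
    have hn : (2 : ℝ) ≤ n := by exact_mod_cast (by omega : 2 ≤ n)
    have hnh : (n : ℝ) * h ≤ 2 := by
      have h1 : (n : ℝ) ≤ 2 * (1 / h) := by linarith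
      calc (n : ℝ) * h ≤ 2 * (1 / h) * h := by gcongr
        _ = 2 := by field_simp
    have hsq : ((n : ℝ) * h) ^ 2 ≤ 2 ^ 2 := by gcongr
    have hh2 : h ^ 2 ≤ 4 / (n : ℝ) ^ 2 := by
      rw [le_div_iff₀ (by positivity)]
      nlinarith
    calc -(2 * Real.cos (2 * Real.pi * (j * h)) - 2) ≤ 4 * Real.pi ^ 2 * (j : ℝ) ^ 2 * h ^ 2 := by
          nlinarith
      _ ≤ 4 * Real.pi ^ 2 * (j : ℝ) ^ 2 * (4 / (n : ℝ) ^ 2) := by gcongr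
      _ = _ := by ring

/-- The tail sum `∑_{|j| ≥ N + 1, |k| ≥ M + 1} |c_{jk}|`. -/
noncomputable def tailSum (c : ℤ × ℤ → ℂ) (N M : ℕ) : ℝ :=
  ∑' p : ℤ × ℤ, if N + 1 ≤ p.1.natAbs ∧ M + 1 ≤ p.2.natAbs then ‖c p‖ else 0

lemma hasSum_tailSum {c : ℤ × ℤ → ℂ} (hc : Summable fun p => ‖c p‖) (N M : ℕ) :
    HasSum (fun p : ℤ × ℤ => if N + 1 ≤ p.1.natAbs ∧ M + 1 ≤ p.2.natAbs then ‖c p‖ else 0)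
      (tailSum c N M) := by
  refine (Summable.of_nonneg_of_le (fun p => ?_) (fun p => ?_) hc).hasSum <;> split_ifs <;> simp

lemma tailSum_le {c : ℤ × ℤ → ℂ} (hc : Summable fun p => ‖c p‖) {C : ℝ}
    (hC : ∀ N M : ℕ, 1 ≤ N → 1 ≤ M →
      (N : ℝ≥0∞) * (M : ℝ≥0∞) *
          ∑' p : {p : ℤ × ℤ // (N : ℤ) ≤ |p.1| ∧ (M : ℤ) ≤ |p.2|}, ENNReal.ofReal ‖c p‖
        ≤ ENNReal.ofReal C) (N M : ℕ) :
    (N + 1 : ℝ) * (M + 1) * tailSum c N M ≤ max C 0 := by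
  have h := hC (N + 1) (M + 1) (by omega) (by omega)
  have e : ∑' p : {p : ℤ × ℤ // ((N + 1 : ℕ) : ℤ) ≤ |p.1| ∧ ((M + 1 : ℕ) : ℤ) ≤ |p.2|},
      ENNReal.ofReal ‖c p‖ = ENNReal.ofReal (tailSum c N M) := by
    rw [tailSum, ENNReal.ofReal_tsum_of_nonneg (fun p => by split_ifs <;> simp)
      (hasSum_tailSum hc N M).summable]
    refine (tsum_subtype {p : ℤ × ℤ | ((N + 1 : ℕ) : ℤ) ≤ |p.1| ∧ ((M + 1 : ℕ) : ℤ) ≤ |p.2|}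
      (fun p => ENNReal.ofReal ‖c p‖)).trans (tsum_congr fun p => ?_)
    have hp : (((N + 1 : ℕ) : ℤ) ≤ |p.1| ∧ ((M + 1 : ℕ) : ℤ) ≤ |p.2|) ↔
        (N + 1 ≤ p.1.natAbs ∧ M + 1 ≤ p.2.natAbs) := by
      rw [Int.abs_eq_natAbs, Int.abs_eq_natAbs, Nat.cast_le, Nat.cast_le]
    by_cases hq : N + 1 ≤ p.1.natAbs ∧ M + 1 ≤ p.2.natAbs
    · rw [if_pos hq]
      refine Set.indicator_of_mem ?_ _
      exact hp.2 hq
    · rw [if_neg hq, ENNReal.ofReal_zero]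
      refine Set.indicator_of_notMem ?_ _
      exact fun hm => hq (hp.1 hm)
  rw [e, ← ENNReal.ofReal_natCast, ← ENNReal.ofReal_natCast,
    ← ENNReal.ofReal_mul (by positivity), ← ENNReal.ofReal_mul (by positivity)] at h
  have h' : ENNReal.ofReal C = ENNReal.ofReal (max C 0) := by simp
  rw [h', ENNReal.ofReal_le_ofReal_iff (le_max_right _ _)] at h
  exact_mod_cast h

/-- Exchange of summation in the layer-cake formula: the truncated squares
`(min |j| n)² (min |k| m)²`, summed against `|c_{jk}|`, give a weighted sum of tails. -/
lemma hasSum_truncated {c : ℤ × ℤ → ℂ} (hc : Summable fun p => ‖c p‖) (n m : ℕ) :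
    HasSum (fun p : ℤ × ℤ => ‖c p‖ *
        (((min p.1.natAbs n : ℕ) : ℝ) ^ 2 * ((min p.2.natAbs m : ℕ) : ℝ) ^ 2))
      (∑ N ∈ Finset.range n, ∑ M ∈ Finset.range m,
        (2 * N + 1 : ℝ) * (2 * M + 1) * tailSum c N M) := by
  have h := hasSum_sum (s := Finset.range n) fun N _ => hasSum_sum (s := Finset.range m) fun M _ =>
    (hasSum_tailSum hc N M).mul_left ((2 * N + 1 : ℝ) * (2 * M + 1))
  refine Eq.mp (congrArg (fun f => HasSum f _) (funext fun p => Eq.symm ?_)) h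
  rw [sq_min_eq_sum, sq_min_eq_sum, Finset.sum_mul_sum, Finset.mul_sum]
  refine Finset.sum_congr rfl fun N _ => ?_
  rw [Finset.mul_sum]
  refine Finset.sum_congr rfl fun M _ => ?_
  by_cases h1 : N + 1 ≤ p.1.natAbs <;> by_cases h2 : M + 1 ≤ p.2.natAbs <;>
    simp [h1, h2, mul_comm]

lemma weighted_tailSum_le {c : ℤ × ℤ → ℂ} {C : ℝ}
    (hT : ∀ N M : ℕ, (N + 1 : ℝ) * (M + 1) * tailSum c N M ≤ C) (n m : ℕ) :
    ∑ N ∈ Finset.range n, ∑ M ∈ Finset.range m, (2 * N + 1 : ℝ) * (2 * M + 1) * tailSum c N M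
      ≤ n * m * (4 * C) := by
  have h0 : ∀ N M, 0 ≤ tailSum c N M := fun N M => tsum_nonneg fun p => by split_ifs <;> simp
  calc _ ≤ ∑ N ∈ Finset.range n, ∑ M ∈ Finset.range m, 4 * C := by
        refine Finset.sum_le_sum fun N _ => Finset.sum_le_sum fun M _ => ?_
        calc (2 * N + 1 : ℝ) * (2 * M + 1) * tailSum c N M
            ≤ (2 * (N + 1)) * (2 * (M + 1)) * tailSum c N M := by
              have := h0 N M
              gcongr <;> linarith
          _ = 4 * ((N + 1 : ℝ) * (M + 1) * tailSum c N M) := by ring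
          _ ≤ 4 * C := by linarith [hT N M]
    _ = _ := by simp; ring

/-- (Fülöp–Móricz) If complex numbers `(c_{jk})_{j,k∈ℤ}` are absolutely summable and satisfy
`sup_{N,M≥1} N M ∑_{|j|≥N,|k|≥M} |c_{jk}| < ∞`, then
`φ(θ₁,θ₂) = ∑_{j,k} c_{jk} e^{2πi(jθ₁+kθ₂)}` belongs to the multiple Zygmund class `Λ_*(1,1)`:
there is `C > 0` such that the double second-order difference satisfies
`|Δ_{2,2}φ(x₁,x₂;h₁,h₂)| ≤ C h₁ h₂` for all `x₁, x₂ ∈ ℝ` and `h₁, h₂ > 0`. -/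
theorem fulop_moricz_zygmund
    (c : ℤ × ℤ → ℂ) (hsummable : Summable fun p => ‖c p‖)
    (hsup : ∃ C : ℝ, ∀ N M : ℕ, 1 ≤ N → 1 ≤ M →
      (N : ℝ≥0∞) * (M : ℝ≥0∞) *
          ∑' p : {p : ℤ × ℤ // (N : ℤ) ≤ |p.1| ∧ (M : ℤ) ≤ |p.2|}, ENNReal.ofReal ‖c p‖
        ≤ ENNReal.ofReal C)
    (φ : ℝ → ℝ → ℂ)
    (hφ : ∀ x₁ x₂ : ℝ, φ x₁ x₂ = ∑' p : ℤ × ℤ,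
      c p * Complex.exp (2 * Real.pi * Complex.I * (p.1 * x₁ + p.2 * x₂))) :
    ∃ C : ℝ, 0 < C ∧ ∀ x₁ x₂ h₁ h₂ : ℝ, 0 < h₁ → 0 < h₂ →
      ‖φ (x₁ + h₁) (x₂ + h₂) + φ (x₁ - h₁) (x₂ + h₂)
        + φ (x₁ + h₁) (x₂ - h₂) + φ (x₁ - h₁) (x₂ - h₂)
        - 2 * φ (x₁ + h₁) x₂ - 2 * φ (x₁ - h₁) x₂
        - 2 * φ x₁ (x₂ + h₂) - 2 * φ x₁ (x₂ - h₂) + 4 * φ x₁ x₂‖ ≤ C * h₁ * h₂ := by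
  obtain ⟨C, hC⟩ := hsup
  have hT := tailSum_le hsummable hC
  refine ⟨(16 * Real.pi ^ 2) ^ 2 * (4 * (max C 0 + 1)), by positivity,
    fun x₁ x₂ h₁ h₂ hh₁ hh₂ => ?_⟩
  obtain ⟨n, hn, hnh, hbn⟩ := norm_multiplier_le h₁ hh₁
  obtain ⟨m, hm, hmh, hbm⟩ := norm_multiplier_le h₂ hh₂
  have hnR : (0 : ℝ) < n := by exact_mod_cast hn
  have hmR : (0 : ℝ) < m := by exact_mod_cast hm
  have hexp : ∀ (p : ℤ × ℤ) (y₁ y₂ : ℝ),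
      ‖Complex.exp (2 * Real.pi * Complex.I * (p.1 * y₁ + p.2 * y₂))‖ = 1 := by
    intro p y₁ y₂
    rw [← Complex.norm_exp_ofReal_mul_I (2 * Real.pi * (p.1 * y₁ + p.2 * y₂))]
    congr 2
    push_cast
    ring
  have hs : ∀ y₁ y₂ : ℝ, HasSum (fun p : ℤ × ℤ =>
      c p * Complex.exp (2 * Real.pi * Complex.I * (p.1 * y₁ + p.2 * y₂))) (φ y₁ y₂) := by
    intro y₁ y₂
    rw [hφ]
    refine (Summable.of_norm ?_).hasSum
    simpa only [norm_mul, hexp, mul_one] using hsummable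
  have hΔ := ((((((((hs (x₁ + h₁) (x₂ + h₂)).add (hs (x₁ - h₁) (x₂ + h₂))).add
    (hs (x₁ + h₁) (x₂ - h₂))).add (hs (x₁ - h₁) (x₂ - h₂))).sub
    ((hs (x₁ + h₁) x₂).mul_left 2)).sub ((hs (x₁ - h₁) x₂).mul_left 2)).sub
    ((hs x₁ (x₂ + h₂)).mul_left 2)).sub ((hs x₁ (x₂ - h₂)).mul_left 2)).add
    ((hs x₁ x₂).mul_left 4)
  have hB := (hasSum_truncated hsummable n m).mul_left
    (16 * Real.pi ^ 2 / (n : ℝ) ^ 2 * (16 * Real.pi ^ 2 / (m : ℝ) ^ 2))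
  rw [← hΔ.tsum_eq]
  refine (tsum_of_norm_bounded hB fun p => ?_).trans ?_
  · have factor : ∀ e u u' v v' : ℂ,
        c p * (e * u * v) + c p * (e * u' * v) + c p * (e * u * v') + c p * (e * u' * v')
          - 2 * (c p * (e * u)) - 2 * (c p * (e * u')) - 2 * (c p * (e * v))
          - 2 * (c p * (e * v')) + 4 * (c p * e)
        = c p * e * ((u + u' - 2) * (v + v' - 2)) := by
      intros
      ring
    have f := factor (Complex.exp (2 * Real.pi * Complex.I * (p.1 * x₁ + p.2 * x₂)))
      (Complex.exp (2 * Real.pi * Complex.I * (p.1 * h₁)))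
      (Complex.exp (-(2 * Real.pi * Complex.I * (p.1 * h₁))))
      (Complex.exp (2 * Real.pi * Complex.I * (p.2 * h₂)))
      (Complex.exp (-(2 * Real.pi * Complex.I * (p.2 * h₂))))
    have hle : ‖c p * Complex.exp (2 * Real.pi * Complex.I * (p.1 * x₁ + p.2 * x₂)) *
        ((Complex.exp (2 * Real.pi * Complex.I * (p.1 * h₁)) +
          Complex.exp (-(2 * Real.pi * Complex.I * (p.1 * h₁))) - 2) *
        (Complex.exp (2 * Real.pi * Complex.I * (p.2 * h₂)) +
          Complex.exp (-(2 * Real.pi * Complex.I * (p.2 * h₂))) - 2))‖ ≤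
        16 * Real.pi ^ 2 / (n : ℝ) ^ 2 * (16 * Real.pi ^ 2 / (m : ℝ) ^ 2) *
          (‖c p‖ * (((min p.1.natAbs n : ℕ) : ℝ) ^ 2 * ((min p.2.natAbs m : ℕ) : ℝ) ^ 2)) := by
      rw [norm_mul, norm_mul, norm_mul, hexp, mul_one]
      refine (mul_le_mul_of_nonneg_left (mul_le_mul (hbn p.1) (hbm p.2) (norm_nonneg _)
        (by positivity)) (norm_nonneg _)).trans_eq ?_
      ring
    refine le_of_eq_of_le (congrArg _ ?_) hle
    rw [← f]
    simp only [← Complex.exp_add]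
    push_cast
    ring_nf
  · calc _ ≤ 16 * Real.pi ^ 2 / (n : ℝ) ^ 2 * (16 * Real.pi ^ 2 / (m : ℝ) ^ 2) *
          (n * m * (4 * max C 0)) := by
          gcongr
          exact weighted_tailSum_le hT n m
      _ = (16 * Real.pi ^ 2) ^ 2 * (4 * max C 0) * (1 / n) * (1 / m) := by
          field_simp
      _ ≤ (16 * Real.pi ^ 2) ^ 2 * (4 * (max C 0 + 1)) * h₁ * h₂ := by
          have : max C 0 ≤ max C 0 + 1 := by linarith
          have : 0 ≤ max C 0 := le_max_right _ _
          gcongr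
end

section
/- Let B ⊂ ℝ^d be a bounded Borel set, let λ > 0, and for n ∈ ℤ^d set Q_n = nλ + [−λ/2, λ/2)^d. Define c_0 = λ^d·Leb(B) − ∫_{Q_0×Q_0} |χ̂_B(x−y)|² dx dy and, for n ∈ ℤ^d \ {0}, c_n = −∫_{Q_0×Q_n} |χ̂_B(x−y)|² dx dy. Then ∑_{n∈ℤ^d} |c_n| < ∞ and ∑_{n∈ℤ^d} c_n = 0. -/
/-!
The squared kernel `h = ‖χ̂_B‖²` is integrable on `ℝ^d` with total mass `Leb(B)`, by Plancherel's
theorem (`plancherel_indicator`). The cubes `Q n` tile `ℝ^d`, so by countable additivity the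
integrals of `h (x - y)` over `Q 0 × Q n` sum, absolutely, to its integral over `Q 0 × ℝ^d`, which
by translation invariance is `Leb(Q 0) * Leb(B) = λ^d Leb(B)` (`hasSum_integral_cubes`). The
covariances are minus these integrals, with `λ^d Leb(B)` added at `n = 0`; hence they sum to `0`.

Mathlib defines the Fourier transform on `L²` by extension from Schwartz functions. For functions
in `L¹ ∩ L²` it agrees almost everywhere with the Fourier integral, since the two have the same
pairing with every test function (`fourier_toLp_ae_eq`).
-/

open MeasureTheory Complex Real ENNReal

open FourierTransform SchwartzMap in
/-- On `L¹ ∩ L²` the Fourier transform defined by extension agrees with the Fourier integral: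
both satisfy `∫ g · 𝓕 f = ∫ 𝓕 g · f` for all test functions `g`, and a locally integrable function
is determined by its integrals against test functions. -/
theorem fourier_toLp_ae_eq {E : Type*} [NormedAddCommGroup E] [MeasurableSpace E] [BorelSpace E]
    [InnerProductSpace ℝ E] [FiniteDimensional ℝ E] {f : E → ℂ} (hf : Integrable f)
    (hf2 : MemLp f 2) :
    ((𝓕 (hf2.toLp f) : Lp (α := E) ℂ 2) : E → ℂ) =ᵐ[volume] 𝓕 f := by
  have hcont : Continuous (𝓕 f) :=
    VectorFourier.fourierIntegral_continuous Real.continuous_fourierChar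
      (innerSL ℝ).continuous₂ hf
  apply ae_eq_of_integral_contDiff_smul_eq
  · exact (Lp.memLp _).locallyIntegrable (by norm_num)
  · exact hcont.locallyIntegrable
  intro g hg hgc
  have hg₁ : HasCompactSupport (Complex.ofRealCLM ∘ g) := hgc.comp_left rfl
  have hg₂ : ContDiff ℝ (⊤ : ℕ∞) (Complex.ofRealCLM ∘ g) := by fun_prop
  set G : 𝓢(E, ℂ) := hg₁.toSchwartzMap hg₂ with hG
  have hGg : ∀ x, G x = (g x : ℂ) := fun x => by simp [hG]
  have h1 := congrArg (fun T : 𝓢'(E, ℂ) => T G)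
    (Lp.fourier_toTemperedDistribution_eq (hf2.toLp f))
  simp only [TemperedDistribution.fourier_apply, Lp.toTemperedDistribution_apply] at h1
  have h2 : ∫ x, (𝓕 G) x • (hf2.toLp f) x = ∫ x, G x • 𝓕 f x := by
    calc _ = ∫ x, (𝓕 G) x • f x := by
          apply integral_congr_ae
          filter_upwards [hf2.coeFn_toLp] with x hx
          rw [hx]
      _ = _ := by
          simpa using! VectorFourier.integral_fourierIntegral_smul_eq_flip (L := innerₗ E)
            Real.continuous_fourierChar continuous_inner G.integrable hf
  rw [h2] at h1
  simp only [hGg] at h1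
  simpa using h1.symm

open FourierTransform in
/-- Plancherel's theorem for the indicator function of a set of finite measure. -/
theorem plancherel_indicator {E : Type*} [NormedAddCommGroup E] [MeasurableSpace E] [BorelSpace E]
    [InnerProductSpace ℝ E] [FiniteDimensional ℝ E] {B : Set E} (hB : MeasurableSet B)
    (hfin : volume B ≠ ∞) :
    Continuous (𝓕 (B.indicator fun _ => (1 : ℂ))) ∧
    Integrable (fun ξ => ‖𝓕 (B.indicator fun _ => (1 : ℂ)) ξ‖ ^ 2) ∧
    ∫ ξ, ‖𝓕 (B.indicator fun _ => (1 : ℂ)) ξ‖ ^ 2 = (volume B).toReal := by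
  set f : E → ℂ := B.indicator fun _ => (1 : ℂ) with hfdef
  have hf2 : MemLp f 2 := memLp_indicator_const 2 hB 1 (Or.inr hfin)
  have hf : Integrable f := (integrable_indicator_iff hB).2 (integrableOn_const hfin)
  have hae := fourier_toLp_ae_eq hf hf2
  have hcont : Continuous (𝓕 f) :=
    VectorFourier.fourierIntegral_continuous Real.continuous_fourierChar
      (innerSL ℝ).continuous₂ hf
  have hm : MemLp (𝓕 f) 2 := (memLp_congr_ae hae).1 (Lp.memLp _)
  refine ⟨hcont, hm.integrable_norm_pow (by norm_num), ?_⟩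
  have key : ∀ u : Lp (α := E) ℂ 2 volume, ‖u‖ ^ 2 = ∫ x, ‖u x‖ ^ 2 := by
    intro u
    have := L2.inner_def (𝕜 := ℂ) u u
    rw [inner_self_eq_norm_sq_to_K] at this
    simp only [inner_self_eq_norm_sq_to_K] at this
    apply Complex.ofReal_injective
    rw [← integral_complex_ofReal]
    simpa using this
  calc ∫ ξ, ‖𝓕 f ξ‖ ^ 2 = ‖(𝓕 (hf2.toLp f) : Lp (α := E) ℂ 2 volume)‖ ^ 2 := by
        rw [key]
        apply integral_congr_ae
        filter_upwards [hae] with x hx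
        rw [hx]
    _ = ‖hf2.toLp f‖ ^ 2 := by rw [Lp.norm_fourier_eq]
    _ = ∫ x, B.indicator (fun _ => (1 : ℝ)) x := by
        rw [key]
        apply integral_congr_ae
        filter_upwards [hf2.coeFn_toLp] with x hx
        rw [hx]
        by_cases h : x ∈ B <;> simp [hfdef, h]
    _ = (volume B).toReal := by
        rw [integral_indicator hB]; simp [Measure.real]

/-- The Fourier transform of the indicator function of `B`, written in the coordinates of
`Fin d → ℝ`, is continuous, and its square has integral `Leb(B)`. -/
theorem plancherel_pi {d : ℕ} {B : Set (Fin d → ℝ)} (hB : MeasurableSet B)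
    (hfin : volume B ≠ ∞) {Fhat : (Fin d → ℝ) → ℂ}
    (hFhat : ∀ ξ, Fhat ξ =
      ∫ x in B, Complex.exp (-(2 * Real.pi * Complex.I) * ∑ i, x i * ξ i)) :
    Continuous Fhat ∧ Integrable (fun ξ => ‖Fhat ξ‖ ^ 2) ∧
      ∫ ξ, ‖Fhat ξ‖ ^ 2 = (volume B).toReal := by
  have mp := PiLp.volume_preserving_ofLp (Fin d)
  have mp' := PiLp.volume_preserving_toLp (Fin d)
  have me : MeasurableEmbedding (WithLp.toLp 2 : (Fin d → ℝ) → EuclideanSpace ℝ (Fin d)) :=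
    (MeasurableEquiv.toLp 2 (Fin d → ℝ)).measurableEmbedding
  set B' : Set (EuclideanSpace ℝ (Fin d)) := WithLp.ofLp ⁻¹' B with hB'
  have hB'm : MeasurableSet B' := mp.measurable hB
  have hvol : volume B' = volume B := mp.measure_preimage hB.nullMeasurableSet
  have hF : Fhat = fun ξ => FourierTransform.fourier (B'.indicator fun _ => (1 : ℂ))
      (WithLp.toLp 2 ξ : EuclideanSpace ℝ (Fin d)) := by
    funext ξ
    rw [hFhat, Real.fourier_eq', ← mp'.integral_comp me, ← integral_indicator hB]
    congr 1
    funext x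
    by_cases hx : x ∈ B
    · simp [hB', hx, PiLp.inner_apply]
      congr 1
      simp_rw [mul_comm (ξ _ : ℂ)]
      ring
    · simp [hB', hx]
  obtain ⟨h1, h2, h3⟩ := plancherel_indicator hB'm (hvol ▸ hfin)
  rw [hF]
  refine ⟨h1.comp (PiLp.continuous_toLp 2 _), ?_, ?_⟩
  · exact mp'.integrable_comp_of_integrable h2
  · rw [← hvol, ← h3]
    exact mp'.integral_comp me
      (fun w => ‖FourierTransform.fourier (B'.indicator fun _ => (1 : ℂ)) w‖ ^ 2)

/-- Membership in a half-open cube of the lattice amounts to rounding each coordinate of `x / λ`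
to the nearest integer. -/
theorem mem_cube_iff {d : ℕ} {lam : ℝ} (hlam : 0 < lam) (n : Fin d → ℤ) (x : Fin d → ℝ) :
    (x ∈ Set.univ.pi fun i =>
      Set.Ico ((n i : ℝ) * lam - lam / 2) ((n i : ℝ) * lam + lam / 2)) ↔
      n = fun i => ⌊x i / lam + 1 / 2⌋ := by
  rw [funext_iff, Set.mem_univ_pi]
  refine forall_congr' fun i => ?_
  rw [eq_comm, Int.floor_eq_iff, Set.mem_Ico, ← sub_le_iff_le_add, le_div_iff₀ hlam,
    ← lt_sub_iff_add_lt, div_lt_iff₀ hlam]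
  ring_nf

/-- For a continuous integrable function `h` and a measurable tiling `Q` with `Leb(Q 0) < ∞`, the
integrals of `h (x - y)` over the products `Q 0 × Q n` sum to `Leb(Q 0) * ∫ h`. -/
theorem hasSum_integral_cubes {d : ℕ} {Q : (Fin d → ℤ) → Set (Fin d → ℝ)}
    (hQm : ∀ n, MeasurableSet (Q n)) (hdisj : Pairwise (Function.onFun Disjoint Q))
    (hcover : ⋃ n, Q n = Set.univ) (hfin : volume (Q 0) ≠ ∞) {h : (Fin d → ℝ) → ℝ}
    (hc : Continuous h) (hi : Integrable h) :
    HasSum (fun n => ∫ x in Q 0, ∫ y in Q n, h (x - y))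
      ((volume (Q 0)).toReal * ∫ ξ, h ξ) := by
  have hint : IntegrableOn (fun z : (Fin d → ℝ) × (Fin d → ℝ) => h (z.1 - z.2))
      (Q 0 ×ˢ Set.univ) (volume.prod volume) := by
    rw [IntegrableOn, ← Measure.prod_restrict, Measure.restrict_univ]
    have : IsFiniteMeasure (volume.restrict (Q 0)) := isFiniteMeasure_restrict.2 hfin
    rw [integrable_prod_iff (by
      exact (hc.comp (continuous_fst.sub continuous_snd)).aestronglyMeasurable)]
    refine ⟨ae_of_all _ fun x => hi.comp_sub_left x, ?_⟩
    have : ∀ x : Fin d → ℝ, ∫ y, ‖h (x - y)‖ = ∫ y, ‖h y‖ := fun x =>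
      integral_sub_left_eq_self (fun y => ‖h y‖) volume x
    simp only [this]
    exact integrable_const _
  have hU : (⋃ n, Q 0 ×ˢ Q n) = Q 0 ×ˢ (Set.univ : Set (Fin d → ℝ)) := by
    rw [← Set.prod_iUnion, hcover]
  have hs := hasSum_integral_iUnion (μ := (volume : Measure (Fin d → ℝ)).prod volume)
    (f := fun z : (Fin d → ℝ) × (Fin d → ℝ) => h (z.1 - z.2)) (s := fun n => Q 0 ×ˢ Q n)
    (fun n => (hQm 0).prod (hQm n))
    (fun n m hnm => Set.disjoint_prod.2 (Or.inr (hdisj hnm))) (by rw [hU]; exact hint)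
  rw [hU, setIntegral_prod _ hint] at hs
  have hsum : ∫ x in Q 0, ∫ y in Set.univ, h (x - y) = (volume (Q 0)).toReal * ∫ ξ, h ξ := by
    simp only [Measure.restrict_univ]
    have : ∀ x : Fin d → ℝ, ∫ y, h (x - y) = ∫ y, h y := fun x =>
      integral_sub_left_eq_self h volume x
    simp [this, Measure.real]
  rw [hsum] at hs
  have heq : (fun n => ∫ x in Q 0, ∫ y in Q n, h (x - y)) =
      fun n => ∫ z in Q 0 ×ˢ Q n, h (z.1 - z.2) ∂volume.prod volume := funext fun n =>
    (setIntegral_prod _ (hint.mono_set (Set.prod_mono_right (Set.subset_univ _)))).symm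
  rw [heq]
  exact hs

/-- For a bounded Borel set `B ⊂ ℝ^d` and `λ > 0`, the covariances
`c_n = Cov(N_0, N_n)` of particle numbers in the cubes `Q_n = nλ + [−λ/2, λ/2)^d` under the
determinantal point process with kernel `K_B(x,y) = χ̂_B(x−y)` satisfy `∑_n |c_n| < ∞` and
`∑_n c_n = 0`. -/
theorem covariances_summable_and_sum_zero
    (d : ℕ) (B : Set (Fin d → ℝ)) (hBbdd : Bornology.IsBounded B) (hBmeas : MeasurableSet B)
    (lam : ℝ) (hlam : 0 < lam)
    (Fhat : (Fin d → ℝ) → ℂ)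
    (hFhat : ∀ ξ, Fhat ξ = ∫ x in B, Complex.exp (-(2 * Real.pi * Complex.I) * ∑ i, x i * ξ i))
    (Q : (Fin d → ℤ) → Set (Fin d → ℝ))
    (hQ : ∀ n, Q n = Set.univ.pi fun i => Set.Ico ((n i : ℝ) * lam - lam / 2) ((n i : ℝ) * lam + lam / 2))
    (c : (Fin d → ℤ) → ℝ)
    (hc0 : c 0 = lam ^ d * (volume B).toReal
      - ∫ x in Q 0, ∫ y in Q 0, ‖Fhat (x - y)‖ ^ 2)
    (hcn : ∀ n : Fin d → ℤ, n ≠ 0 →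
      c n = -∫ x in Q 0, ∫ y in Q n, ‖Fhat (x - y)‖ ^ 2) :
    (Summable fun n : Fin d → ℤ => |c n|) ∧ ∑' n : Fin d → ℤ, c n = 0 := by
  obtain ⟨hc, hi, hI⟩ := plancherel_pi hBmeas hBbdd.measure_lt_top.ne hFhat
  have hmem : ∀ n x, x ∈ Q n ↔ n = fun i => ⌊x i / lam + 1 / 2⌋ := fun n x => by
    rw [hQ]; exact mem_cube_iff hlam n x
  have hvol : volume (Q 0) = ENNReal.ofReal (lam ^ d) := by
    rw [hQ, Real.volume_pi_Ico, ENNReal.ofReal_pow hlam.le]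
    simp
  have hs := hasSum_integral_cubes (Q := Q)
    (fun n => by rw [hQ]; exact MeasurableSet.univ_pi fun i => measurableSet_Ico)
    (fun n m hnm => Set.disjoint_left.2 fun x hn hm =>
      hnm (((hmem n x).1 hn).trans ((hmem m x).1 hm).symm))
    (Set.eq_univ_of_forall fun x => Set.mem_iUnion.2 ⟨_, (hmem _ x).2 rfl⟩)
    (by rw [hvol]; exact ENNReal.ofReal_ne_top)
    (h := fun ξ => ‖Fhat ξ‖ ^ 2) (by fun_prop) hi
  rw [hI, hvol, ENNReal.toReal_ofReal (by positivity)] at hs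
  have hsum : HasSum c 0 := by
    have := (hasSum_ite_eq (0 : Fin d → ℤ) (lam ^ d * (volume B).toReal)).sub hs
    rw [sub_self] at this
    have hce : c = fun n => (if n = 0 then lam ^ d * (volume B).toReal else 0) -
        ∫ x in Q 0, ∫ y in Q n, ‖Fhat (x - y)‖ ^ 2 := by
      funext n
      by_cases hn : n = 0
      · subst hn; simp [hc0]
      · simp [hn, hcn n hn]
    rw [hce]
    exact this
  exact ⟨hsum.summable.abs, hsum.tsum_eq⟩
end

section
/- Let B ⊂ ℝ be a bounded Borel set satisfying sup_{R > 0} ( R ∫_{|ξ| ≥ R} |χ̂_B(ξ)|² dξ ) < ∞. Fix λ > 0 and for n ∈ ℤ set Q_n = nλ + [−λ/2, λ/2). Define c_n = −∫_{Q_0×Q_n} |χ̂_B(x−y)|² dx dy for n ≠ 0 and c_0 = λ·Leb(B) − ∫_{Q_0×Q_0} |χ̂_B(x−y)|² dx dy. Then sup_{N ≥ 1} ( N ∑_{|n| ≥ N} |c_n| ) < ∞. -/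
open MeasureTheory Complex Real ENNReal

/-!
For `n ≠ 0`, `|c n|` is the integral of `‖Fhat (x - y)‖²` over `Q 0 × Q n`. The intervals `Q n` are
disjoint, and `x ∈ Q 0`, `y ∈ Q n` with `|n| ≥ N` force `|x - y| ≥ (N - 1) * lam`. Hence, by
translation invariance, `∑_{|n| ≥ N} |c n| ≤ lam * G ((N - 1) * lam)`, where `G R` is the integral of
`‖Fhat ξ‖²` over `|ξ| ≥ R` (lemma `tsum_lintegral_cells_le`). For `N ≥ 2` the decay hypothesis at
`R = (N - 1) * lam` and `N ≤ 2 * (N - 1)` give the bound `2 * C`. For `N = 1` the radius degenerates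
to `0`, and one uses instead that `G 0` is finite: `Fhat` is bounded by the measure of `B`, which
handles `|ξ| < 1`, and the decay hypothesis at `R = 1` handles the rest.
-/

/-- The mass of a translation-invariant kernel `g (x - y)` between the central cell and all cells of
index at least `N` in absolute value is controlled by the tail of `g` beyond `(N - 1) * lam`. -/
lemma tsum_lintegral_cells_le (g : ℝ → ℝ≥0∞) (hg : Measurable g) (lam : ℝ) (hlam : 0 < lam)
    (Q : ℤ → Set ℝ)
    (hQ : ∀ n : ℤ, Q n = Set.Ico ((n : ℝ) * lam - lam / 2) ((n : ℝ) * lam + lam / 2))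
    (N : ℕ) :
    ∑' n : {n : ℤ // (N : ℤ) ≤ |n|}, ∫⁻ x in Q 0, ∫⁻ y in Q n, g (x - y)
      ≤ ENNReal.ofReal lam * ∫⁻ ξ in {ξ : ℝ | ((N : ℝ) - 1) * lam ≤ |ξ|}, g ξ := by
  have hQm : ∀ n, MeasurableSet (Q n) := fun n => by rw [hQ]; exact measurableSet_Ico
  have hS : MeasurableSet {ξ : ℝ | ((N : ℝ) - 1) * lam ≤ |ξ|} :=
    measurableSet_le measurable_const measurable_id.abs
  have hg2 : Measurable (fun p : ℝ × ℝ => g (p.1 - p.2)) :=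
    hg.comp (measurable_fst.sub measurable_snd)
  have hlt : ∀ m n : ℤ, m < n → Disjoint (Q m) (Q n) := by
    intro m n hmn
    rw [Set.disjoint_left]
    intro x hx hx'
    rw [hQ] at hx hx'
    have h1 : (m : ℝ) + 1 ≤ n := by exact_mod_cast hmn
    have h2 := mul_le_mul_of_nonneg_right h1 hlam.le
    linarith [hx.2, hx'.1]
  have hdisj : Pairwise (Function.onFun Disjoint
      (fun n : {n : ℤ // (N : ℤ) ≤ |n|} => Q n)) := by
    intro m n hmn
    rcases lt_or_gt_of_ne (fun h => hmn (Subtype.ext h)) with h | h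
    · exact hlt _ _ h
    · exact (hlt _ _ h).symm
  rw [← lintegral_tsum fun n => (Measurable.lintegral_prod_right hg2).aemeasurable]
  have key : ∀ x ∈ Q 0, ∑' n : {n : ℤ // (N : ℤ) ≤ |n|}, ∫⁻ y in Q n, g (x - y)
      ≤ ∫⁻ ξ in {ξ : ℝ | ((N : ℝ) - 1) * lam ≤ |ξ|}, g ξ := by
    intro x hx
    rw [← lintegral_iUnion (fun n => hQm _) hdisj, ← lintegral_indicator hS,
      ← lintegral_sub_left_eq_self (Set.indicator _ g) x,
      ← lintegral_indicator (MeasurableSet.iUnion fun n => hQm _)]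
    refine lintegral_mono fun y => ?_
    by_cases hy : y ∈ ⋃ n : {n : ℤ // (N : ℤ) ≤ |n|}, Q n
    swap
    · rw [Set.indicator_of_notMem hy]
      exact zero_le
    rw [Set.indicator_of_mem hy]
    obtain ⟨⟨n, hn⟩, hy⟩ := Set.mem_iUnion.1 hy
    rw [Set.indicator_of_mem]
    simp only [hQ, Set.mem_Ico, Int.cast_zero, zero_mul, Set.mem_ofPred_eq] at hx hy ⊢
    rcases le_abs.1 hn with h | h
    · have h1 : (N : ℝ) ≤ n := by exact_mod_cast h
      have h2 := mul_le_mul_of_nonneg_right h1 hlam.le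
      exact le_abs.2 (Or.inr (by linarith))
    · have h1 : (N : ℝ) ≤ -n := by exact_mod_cast h
      have h2 := mul_le_mul_of_nonneg_right h1 hlam.le
      exact le_abs.2 (Or.inl (by linarith))
  refine (setLIntegral_mono' (hQm 0) key).trans ?_
  rw [setLIntegral_const, hQ, Real.volume_Ico, mul_comm]
  refine le_of_eq ?_
  congr 2
  ring

/-- Let `B ⊂ ℝ` be a bounded Borel set with `sup_{R>0} R ∫_{|ξ|≥R} |χ̂_B(ξ)|² dξ < ∞`. Then the
covariances `c_n = Cov(N_0, N_n)` of particle numbers in the intervals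
`Q_n = nλ + [−λ/2, λ/2)` under the determinantal point process with kernel
`K_B(x,y) = χ̂_B(x−y)` satisfy `sup_{N≥1} N ∑_{|n|≥N} |c_n| < ∞`. -/
theorem covariance_tails_bound
    (B : Set ℝ) (hBbdd : Bornology.IsBounded B) (hBmeas : MeasurableSet B)
    (Fhat : ℝ → ℂ)
    (hFhat : ∀ ξ : ℝ, Fhat ξ = ∫ x in B, Complex.exp (-(2 * Real.pi * Complex.I) * x * ξ))
    (htail : ∃ C : ℝ, ∀ R : ℝ, 0 < R →
      ENNReal.ofReal R * ∫⁻ ξ in {ξ : ℝ | R ≤ |ξ|}, ENNReal.ofReal (‖Fhat ξ‖ ^ 2)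
        ≤ ENNReal.ofReal C)
    (lam : ℝ) (hlam : 0 < lam)
    (Q : ℤ → Set ℝ)
    (hQ : ∀ n : ℤ, Q n = Set.Ico ((n : ℝ) * lam - lam / 2) ((n : ℝ) * lam + lam / 2))
    (c : ℤ → ℝ)
    (hc0 : c 0 = lam * (volume B).toReal - ∫ x in Q 0, ∫ y in Q 0, ‖Fhat (x - y)‖ ^ 2)
    (hcn : ∀ n : ℤ, n ≠ 0 → c n = -∫ x in Q 0, ∫ y in Q n, ‖Fhat (x - y)‖ ^ 2) :
    ∃ C : ℝ, ∀ N : ℕ, 1 ≤ N →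
      (N : ℝ≥0∞) * ∑' n : {n : ℤ // (N : ℤ) ≤ |n|}, ENNReal.ofReal |c n|
        ≤ ENNReal.ofReal C := by
  obtain ⟨C, hC⟩ := htail
  have hvol : volume B < ∞ := hBbdd.measure_lt_top
  have hmeas : Measurable Fhat := by
    have : StronglyMeasurable fun ξ : ℝ =>
        ∫ x in B, Complex.exp (-(2 * Real.pi * Complex.I) * x * ξ) := by
      apply StronglyMeasurable.integral_prod_right
        (f := fun ξ x : ℝ => Complex.exp (-(2 * Real.pi * Complex.I) * x * ξ))
      exact Continuous.stronglyMeasurable (by fun_prop)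
    rw [funext hFhat]
    exact this.measurable
  have hbound : ∀ ξ, ‖Fhat ξ‖ ≤ (volume B).toReal := by
    intro ξ
    rw [hFhat]
    have h := norm_setIntegral_le_of_norm_le_const (μ := volume) (C := 1) hvol
      (f := fun x : ℝ => Complex.exp (-(2 * Real.pi * Complex.I) * x * ξ)) (fun x _ => by
        rw [Complex.norm_exp]
        simp)
    simpa [Measure.real] using h
  set g : ℝ → ℝ≥0∞ := fun ξ => ENNReal.ofReal (‖Fhat ξ‖ ^ 2) with hg_def
  have hg : Measurable g := (hmeas.norm.pow_const 2).ennreal_ofReal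
  -- `G 0 < ∞`, where `G R = ∫_{|ξ| ≥ R} ‖Fhat ξ‖²`: split at `|ξ| = 1`.
  have hfin : ∫⁻ ξ, g ξ < ∞ := by
    have hS : MeasurableSet {ξ : ℝ | 1 ≤ |ξ|} :=
      measurableSet_le measurable_const measurable_id.abs
    rw [← lintegral_add_compl g hS, ENNReal.add_lt_top]
    refine ⟨?_, ?_⟩
    · have h := hC 1 one_pos
      rw [ENNReal.ofReal_one, one_mul] at h
      exact h.trans_lt ENNReal.ofReal_lt_top
    · have hsub : {ξ : ℝ | 1 ≤ |ξ|}ᶜ ⊆ Set.Icc (-1) 1 := by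
        intro ξ hξ
        simp only [Set.mem_compl_iff, Set.mem_ofPred_eq, not_le] at hξ
        exact abs_le.1 hξ.le
      refine (lintegral_mono_set hsub).trans_lt ?_
      refine (lintegral_mono (g := fun _ => ENNReal.ofReal ((volume B).toReal ^ 2))
        fun ξ => ENNReal.ofReal_le_ofReal
          (pow_le_pow_left₀ (norm_nonneg _) (hbound ξ) 2)).trans_lt ?_
      rw [setLIntegral_const]
      exact ENNReal.mul_lt_top ENNReal.ofReal_lt_top (by simp)
  have hc : ∀ n : ℤ, n ≠ 0 →
      ENNReal.ofReal |c n| ≤ ∫⁻ x in Q 0, ∫⁻ y in Q n, g (x - y) := by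
    intro n hn
    rw [hcn n hn, abs_neg, ← Real.enorm_eq_ofReal_abs]
    refine (enorm_integral_le_lintegral_enorm _).trans (lintegral_mono fun x => ?_)
    refine (enorm_integral_le_lintegral_enorm _).trans (lintegral_mono fun y => ?_)
    rw [Real.enorm_eq_ofReal_abs, abs_of_nonneg (by positivity)]
  have hsum : ∀ N : ℕ, 1 ≤ N → ∑' n : {n : ℤ // (N : ℤ) ≤ |n|}, ENNReal.ofReal |c n|
      ≤ ENNReal.ofReal lam * ∫⁻ ξ in {ξ : ℝ | ((N : ℝ) - 1) * lam ≤ |ξ|}, g ξ := by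
    intro N hN
    refine (ENNReal.tsum_le_tsum fun n : {n : ℤ // (N : ℤ) ≤ |n|} => hc n ?_).trans
      (tsum_lintegral_cells_le g hg lam hlam Q hQ N)
    intro h
    have := n.2
    rw [h, abs_zero] at this
    omega
  have htop : ENNReal.ofReal lam * (∫⁻ ξ, g ξ) + 2 * ENNReal.ofReal C ≠ ∞ :=
    ENNReal.add_ne_top.2 ⟨ENNReal.mul_ne_top ENNReal.ofReal_ne_top hfin.ne,
      ENNReal.mul_ne_top ENNReal.ofNat_ne_top ENNReal.ofReal_ne_top⟩
  refine ⟨(ENNReal.ofReal lam * (∫⁻ ξ, g ξ) + 2 * ENNReal.ofReal C).toReal, fun N hN => ?_⟩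
  rw [ENNReal.ofReal_toReal htop]
  refine (mul_le_mul_right (hsum N hN) (N : ℝ≥0∞)).trans ?_
  rcases hN.eq_or_lt with rfl | hN2
  · refine le_trans ?_ le_self_add
    rw [Nat.cast_one, one_mul]
    gcongr
    exact Measure.restrict_le_self
  · refine le_trans ?_ le_add_self
    have hN2' : (2 : ℝ) ≤ N := by exact_mod_cast hN2
    have hR : 0 < ((N : ℝ) - 1) * lam := mul_pos (by linarith) hlam
    have hNR : (N : ℝ≥0∞) * ENNReal.ofReal lam ≤ 2 * ENNReal.ofReal (((N : ℝ) - 1) * lam) := by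
      rw [← ENNReal.ofReal_natCast, ← ENNReal.ofReal_mul (by positivity),
        show (2 : ℝ≥0∞) = ENNReal.ofReal 2 by simp, ← ENNReal.ofReal_mul (by norm_num)]
      exact ENNReal.ofReal_le_ofReal (by nlinarith)
    calc (N : ℝ≥0∞) * (ENNReal.ofReal lam * ∫⁻ ξ in {ξ : ℝ | ((N : ℝ) - 1) * lam ≤ |ξ|}, g ξ)
        = ((N : ℝ≥0∞) * ENNReal.ofReal lam)
          * ∫⁻ ξ in {ξ : ℝ | ((N : ℝ) - 1) * lam ≤ |ξ|}, g ξ := (mul_assoc _ _ _).symm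
      _ ≤ (2 * ENNReal.ofReal (((N : ℝ) - 1) * lam))
          * ∫⁻ ξ in {ξ : ℝ | ((N : ℝ) - 1) * lam ≤ |ξ|}, g ξ := by gcongr
      _ = 2 * (ENNReal.ofReal (((N : ℝ) - 1) * lam)
          * ∫⁻ ξ in {ξ : ℝ | ((N : ℝ) - 1) * lam ≤ |ξ|}, g ξ) := mul_assoc _ _ _
      _ ≤ 2 * ENNReal.ofReal C := by
        gcongr
        exact hC _ hR
end

section
/- Let B ⊂ ℝ be a bounded Borel set satisfying sup_{R > 0} ( R ∫_{|ξ| ≥ R} |χ̂_B(ξ)|² dξ ) < ∞. Fix λ > 0, set Q_n = nλ + [−λ/2, λ/2) for n ∈ ℤ, and define c_n = −∫_{Q_0×Q_n} |χ̂_B(x−y)|² dx dy for n ≠ 0 and c_0 = λ·Leb(B) − ∫_{Q_0×Q_0} |χ̂_B(x−y)|² dx dy. Then the function ω(θ) = ∑_{n∈ℤ} c_n e^{2πi n θ} is a real-valued continuous function on 𝕋 = [−1/2, 1/2) satisfying ω(θ) = ω(−θ) and ω(0) = 0, there exists C > 0 with |ω(θ)| ≤ C|θ| for all θ ∈ [−1/2,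 1/2), and consequently ∫_𝕋 |ω(θ)|^{-1} dm(θ) = ∞. -/
/-!
Write `f = |χ̂_B|²` and `a_n = ∫_{Q_0 × Q_n} f(x - y) ≥ 0`. The cells `Q_n` tile the line, so
`∑ a_n = λ ∫ f`, which equals `λ Leb(B)` by Plancherel (`lintegral_fourier_sq`). Hence `c_0` is
exactly `∑ a_m - a_0`, and since `f` is even, `a_{-n} = a_n`; together these give
`ω(θ) = ∑ a_n (1 - cos 2πnθ)` (`tsum_fourier_eq`). This formula makes `ω` real, even, continuous
and zero at `0`.

For `x ∈ Q_0`, `y ∈ Q_n` with `|n| ≥ k` one has `|x - y| ≥ (k - 1)λ`, so the hypothesis on the tails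
of `f` gives `∑_{|n| ≥ k} a_n ≤ D / k` (`tsum_tail_le`). As `1 - cos 2πnθ ≤ 2π² min(1, n²θ²)`, the
linear bound reduces to `∑ a_n min(1, n²θ²) ≤ 4D|θ|` (`tsum_mul_min_le`), which is summation by
parts: `min(1, n²θ²)` is at most the sum of `2kθ²` over `k ≤ min(|n|, N)`, where `N ≈ 1/|θ|`.
Non-integrability of `1/|ω|` is then that of `1/|θ|` at the origin.
-/

open MeasureTheory Complex Real ENNReal

/-! ### Plancherel's theorem for integrable functions in `L²` -/

section Plancherel
open FourierTransform SchwartzMap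

/-- On `L¹ ∩ L²` the `L²` Fourier transform is given by the Fourier integral: both define the same
tempered distribution. -/
theorem fourier_toLp_ae_eq_s8 {f : ℝ → ℂ} (h1 : Integrable f) (h2 : MemLp f 2) :
    ((𝓕 (h2.toLp f) : Lp ℂ 2 (volume : Measure ℝ)) : ℝ → ℂ) =ᵐ[volume] 𝓕 f := by
  have hcont : Continuous (𝓕 f) := by
    exact VectorFourier.fourierIntegral_continuous Real.continuous_fourierChar
      (by exact continuous_inner) h1
  refine ae_eq_of_integral_contDiff_smul_eq
    ((Lp.memLp _).locallyIntegrable (by norm_num)) hcont.locallyIntegrable ?_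
  intro g hg hgs
  have hgs' : HasCompactSupport (fun x => (g x : ℂ)) := hgs.comp_left (g := fun r : ℝ => (r : ℂ)) (by simp)
  have hg' : ContDiff ℝ (⊤ : ℕ∞) (fun x => (g x : ℂ)) := Complex.ofRealCLM.contDiff.comp hg
  set G : 𝓢(ℝ, ℂ) := hgs'.toSchwartzMap hg' with hG
  have hGa : ∀ x, G x = (g x : ℂ) := fun x => rfl
  have key := congrArg (fun T => T G) (Lp.fourier_toTemperedDistribution_eq (h2.toLp f))
  simp only [TemperedDistribution.fourier_apply, Lp.toTemperedDistribution_apply, hGa] at key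
  simp only [smul_eq_mul, ← Complex.coe_smul] at key ⊢
  rw [← key]
  have e1 : ∫ x, (𝓕 G) x * (h2.toLp f) x = ∫ x, (𝓕 G) x * f x := by
    apply integral_congr_ae
    filter_upwards [h2.coeFn_toLp] with x hx
    rw [hx]
  rw [e1]
  have := VectorFourier.integral_fourierIntegral_smul_eq_flip (μ := volume) (ν := volume)
    (L := innerₗ ℝ) (f := G) (g := f) Real.continuous_fourierChar
    (by exact continuous_inner) G.integrable h1
  rw [flip_innerₗ] at this
  rw [SchwartzMap.fourier_coe]
  simp only [smul_eq_mul, hGa] at this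
  exact this

theorem lintegral_fourier_sq {f : ℝ → ℂ} (h1 : Integrable f) (h2 : MemLp f 2) :
    ∫⁻ ξ, ENNReal.ofReal (‖𝓕 f ξ‖ ^ 2) = ∫⁻ x, ENNReal.ofReal (‖f x‖ ^ 2) := by
  have e : ∀ g : ℝ → ℂ, ∫⁻ x, ENNReal.ofReal (‖g x‖ ^ 2) = (eLpNorm g 2 volume) ^ 2 := by
    intro g
    rw [eLpNorm_eq_lintegral_rpow_enorm_toReal (by norm_num) (by norm_num)]
    rw [← ENNReal.rpow_natCast, ← ENNReal.rpow_mul]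
    simp [ENNReal.ofReal_pow]
  rw [e, e, ← eLpNorm_congr_ae (fourier_toLp_ae_eq_s8 h1 h2), ← eLpNorm_congr_ae h2.coeFn_toLp,
    ← Lp.enorm_def, ← Lp.enorm_def, ← ofReal_norm, ← ofReal_norm, Lp.norm_fourier_eq]

end Plancherel


/-! ### Real-variable lemmas -/

theorem lintegral_inv_eq_top_of_linear_bound {g : ℝ → ℝ} {C : ℝ} (hC : 0 < C)
    (hg : ∀ θ ∈ Set.Ico (-(1/2) : ℝ) (1/2), g θ ≤ C * |θ|) :
    ∫⁻ θ in Set.Ico (-(1/2) : ℝ) (1/2), (ENNReal.ofReal (g θ))⁻¹ = ⊤ := by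
  by_contra hne
  have hinv : ¬ IntervalIntegrable (fun x : ℝ => x⁻¹) volume 0 (1/2) := by
    rw [intervalIntegrable_inv_iff]
    simp
  apply hinv
  rw [intervalIntegrable_iff_integrableOn_Ioc_of_le (by norm_num),
    integrableOn_Ioc_iff_integrableOn_Ioo]
  refine ⟨measurable_inv.aestronglyMeasurable, ?_⟩
  have hlt : ENNReal.ofReal C * ∫⁻ θ in Set.Ico (-(1/2) : ℝ) (1/2), (ENNReal.ofReal (g θ))⁻¹ < ⊤ :=
    ENNReal.mul_lt_top ENNReal.ofReal_lt_top (lt_top_iff_ne_top.2 hne)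
  refine lt_of_le_of_lt ?_ hlt
  rw [← lintegral_const_mul' _ _ ENNReal.ofReal_ne_top]
  refine (setLIntegral_mono' measurableSet_Ioo ?_).trans (lintegral_mono_set (s := Set.Ioo 0 (1/2)) ?_)
  · intro θ hθ
    have hθ' : θ ∈ Set.Ico (-(1/2) : ℝ) (1/2) := ⟨by linarith [hθ.1], hθ.2⟩
    have h1 := hg θ hθ'
    rw [abs_of_pos hθ.1] at h1
    rw [Real.enorm_of_nonneg (inv_nonneg.2 hθ.1.le), ENNReal.ofReal_inv_of_pos hθ.1]
    calc (ENNReal.ofReal θ)⁻¹ = ENNReal.ofReal C * (ENNReal.ofReal (C * θ))⁻¹ := by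
          rw [ENNReal.ofReal_mul hC.le, ENNReal.mul_inv (by simp) (by simp), ← mul_assoc,
            ENNReal.mul_inv_cancel (by simpa using hC) (by simp), one_mul]
      _ ≤ _ := by gcongr
  · intro θ hθ
    exact ⟨by linarith [hθ.1], hθ.2⟩

theorem sum_Icc_two_mul (m : ℕ) : ∑ k ∈ Finset.Icc 1 m, 2 * (k : ℝ) = m * (m + 1) := by
  induction m with
  | zero => simp
  | succ m ih =>
    rw [Finset.sum_Icc_succ_top (by omega), ih]; push_cast; ring

/-- Layer-cake bound for `min 1 (m²θ²)`: the sum on the right is `M (M + 1) θ²` with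
`M = min m N`. -/
theorem min_one_sq_le (θ : ℝ) (N m : ℕ) (hN : 1 ≤ N * |θ|) :
    min 1 ((m : ℝ) ^ 2 * θ ^ 2) ≤
      ∑ k ∈ Finset.Icc 1 N, 2 * (k : ℝ) * θ ^ 2 * (if k ≤ m then 1 else 0) := by
  have hsub : ∀ M : ℕ, M ≤ N → M ≤ m → (M : ℝ) ^ 2 * θ ^ 2 ≤
      ∑ k ∈ Finset.Icc 1 N, 2 * (k : ℝ) * θ ^ 2 * (if k ≤ m then 1 else 0) := by
    intro M hMN hMm
    calc (M : ℝ) ^ 2 * θ ^ 2 ≤ (M * (M + 1)) * θ ^ 2 := by gcongr; nlinarith [M.cast_nonneg (α := ℝ)]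
      _ = ∑ k ∈ Finset.Icc 1 M, 2 * (k : ℝ) * θ ^ 2 * (if k ≤ m then 1 else 0) := by
        rw [← sum_Icc_two_mul, Finset.sum_mul]
        refine Finset.sum_congr rfl fun k hk => ?_
        rw [if_pos ((Finset.mem_Icc.1 hk).2.trans hMm), mul_one]
      _ ≤ _ := Finset.sum_le_sum_of_subset_of_nonneg (Finset.Icc_subset_Icc_right hMN)
        fun k _ _ => by positivity
  rcases le_total m N with h | h
  · exact (min_le_right _ _).trans (hsub m h le_rfl)
  · refine (min_le_left _ _).trans (le_trans ?_ (hsub N le_rfl h))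
    rw [← sq_abs θ, ← mul_pow]
    exact one_le_pow₀ hN

/-- Summation by parts: tails of order `1 / k` give a linear modulus at the origin. -/
theorem tsum_mul_min_le {a : ℤ → ℝ} (ha : ∀ n, 0 ≤ a n) (hs : Summable a) {D : ℝ} (hD : 0 ≤ D)
    (ht : ∀ k : ℕ, 1 ≤ k → ∑' n : ℤ, (if k ≤ n.natAbs then a n else 0) ≤ D / k)
    {θ : ℝ} (h0 : θ ≠ 0) (h1 : |θ| ≤ 1) :
    ∑' n : ℤ, a n * min 1 ((n : ℝ) ^ 2 * θ ^ 2) ≤ 4 * D * |θ| := by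
  have hpos : 0 < |θ| := abs_pos.2 h0
  -- `N` is large enough for `min_one_sq_le` and small enough that `N θ² ≤ 2 |θ|`.
  set N := ⌈1 / |θ|⌉₊ with hNdef
  have hN : 1 ≤ N * |θ| := by
    have := Nat.le_ceil (1 / |θ|)
    rwa [div_le_iff₀ hpos] at this
  have hN2 : N * |θ| ≤ 2 := by
    have := (Nat.ceil_lt_add_one (a := 1 / |θ|) (by positivity)).le
    calc N * |θ| ≤ (1 / |θ| + 1) * |θ| := by gcongr
      _ = 1 + |θ| := by field_simp
      _ ≤ 2 := by linarith
  have hsk : ∀ k : ℕ, Summable fun n : ℤ => if k ≤ n.natAbs then a n else 0 := fun k =>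
    Summable.of_nonneg_of_le (fun n => by split_ifs <;> simp [ha]) (fun n => by split_ifs <;> simp [ha]) hs
  have hsum : HasSum (fun n : ℤ => ∑ k ∈ Finset.Icc 1 N,
      2 * (k : ℝ) * θ ^ 2 * (if k ≤ n.natAbs then a n else 0))
      (∑ k ∈ Finset.Icc 1 N, 2 * (k : ℝ) * θ ^ 2 * ∑' n : ℤ, (if k ≤ n.natAbs then a n else 0)) :=
    hasSum_sum fun k _ => (hsk k).hasSum.mul_left _
  calc ∑' n : ℤ, a n * min 1 ((n : ℝ) ^ 2 * θ ^ 2)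
      ≤ ∑' n : ℤ, ∑ k ∈ Finset.Icc 1 N,
          2 * (k : ℝ) * θ ^ 2 * (if k ≤ n.natAbs then a n else 0) := by
        have hle : ∀ n : ℤ, a n * min 1 ((n : ℝ) ^ 2 * θ ^ 2) ≤ ∑ k ∈ Finset.Icc 1 N,
          2 * (k : ℝ) * θ ^ 2 * (if k ≤ n.natAbs then a n else 0) := by
          intro n
          have := mul_le_mul_of_nonneg_left (min_one_sq_le θ N n.natAbs hN) (ha n)
          rw [Finset.mul_sum] at this
          have e : ((n.natAbs : ℕ) : ℝ) ^ 2 = (n : ℝ) ^ 2 := by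
            rw [Nat.cast_natAbs]; push_cast; exact sq_abs _
          rw [e] at this
          refine this.trans (le_of_eq (Finset.sum_congr rfl fun k _ => ?_))
          split_ifs <;> ring
        refine Summable.tsum_le_tsum hle ?_ hsum.summable
        exact Summable.of_nonneg_of_le (fun n => mul_nonneg (ha n) (by positivity)) hle hsum.summable
    _ = _ := hsum.tsum_eq
    _ ≤ ∑ k ∈ Finset.Icc 1 N, 2 * D * θ ^ 2 := by
        refine Finset.sum_le_sum fun k hk => ?_
        have hk1 := (Finset.mem_Icc.1 hk).1
        have hk0 : (0 : ℝ) < k := by exact_mod_cast hk1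
        calc _ ≤ 2 * (k : ℝ) * θ ^ 2 * (D / k) := by gcongr; exact ht k hk1
          _ = _ := by field_simp
    _ = 2 * D * |θ| * (N * |θ|) := by
        rw [Finset.sum_const, Nat.card_Icc, nsmul_eq_mul, ← sq_abs θ, Nat.add_sub_cancel]; ring
    _ ≤ 2 * D * |θ| * 2 := by gcongr
    _ = _ := by ring


/-! ### Double integrals over the cells -/

theorem tsum_lintegral_cells {lam : ℝ} (hlam : 0 < lam) {Q : ℤ → Set ℝ}
    (hQ : ∀ n : ℤ, Q n = Set.Ico ((n : ℝ) * lam - lam / 2) ((n : ℝ) * lam + lam / 2))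
    {G : ℝ → ℝ≥0∞} (hG : Measurable G) :
    ∑' n : ℤ, ∫⁻ x in Q 0, ∫⁻ y in Q n, G (x - y) = ENNReal.ofReal lam * ∫⁻ u, G u := by
  have hQ' : ∀ n : ℤ, Q n = Set.Ico (-(lam / 2) + n • lam) (-(lam / 2) + (n + 1) • lam) := by
    intro n
    rw [hQ]
    simp only [zsmul_eq_mul]
    push_cast
    congr 1 <;> ring
  have hmeas : ∀ n, MeasurableSet (Q n) := fun n => by rw [hQ]; exact measurableSet_Ico
  have hdisj : Pairwise (Function.onFun Disjoint Q) := by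
    have := Set.pairwise_disjoint_Ico_add_zsmul (-(lam / 2)) lam
    rwa [← funext hQ'] at this
  have huniv : ⋃ n, Q n = Set.univ := by
    have := iUnion_Ico_add_zsmul hlam (-(lam / 2))
    rwa [← Set.iUnion_congr hQ'] at this
  have hG2 : Measurable fun p : ℝ × ℝ => G (p.1 - p.2) := hG.comp (measurable_fst.sub measurable_snd)
  rw [← lintegral_tsum fun n => (hG2.lintegral_prod_right').aemeasurable]
  have : ∀ x : ℝ, ∑' n : ℤ, ∫⁻ y in Q n, G (x - y) = ∫⁻ u, G u := by
    intro x
    rw [← lintegral_iUnion hmeas hdisj, huniv, Measure.restrict_univ,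
      lintegral_sub_left_eq_self]
  simp only [this, lintegral_const, Measure.restrict_apply_univ]
  rw [hQ, Real.volume_Ico, mul_comm]
  congr 2
  ring

/-- Symmetry `a_{-n} = a_n`: shifting both cells back to `Q 0`, the two sides are exchanged by
swapping the variables and using that `G` is even. -/
theorem lintegral_cell_neg {lam : ℝ} {Q : ℤ → Set ℝ}
    (hQ : ∀ n : ℤ, Q n = Set.Ico ((n : ℝ) * lam - lam / 2) ((n : ℝ) * lam + lam / 2))
    {G : ℝ → ℝ≥0∞} (hG : Measurable G) (heven : ∀ u, G (-u) = G u) (n : ℤ) :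
    ∫⁻ x in Q 0, ∫⁻ y in Q (-n), G (x - y) = ∫⁻ x in Q 0, ∫⁻ y in Q n, G (x - y) := by
  have shift : ∀ (m : ℤ) (x : ℝ), ∫⁻ y in Q m, G (x - y) = ∫⁻ y in Q 0, G (x - y - m * lam) := by
    intro m x
    have hmp := measurePreserving_add_right (volume : Measure ℝ) (m * lam)
    have hpre : (fun y : ℝ => y + m * lam) ⁻¹' (Q m) = Q 0 := by
      ext y
      simp only [hQ, Set.mem_preimage, Set.mem_Ico]
      push_cast
      constructor <;> rintro ⟨h1, h2⟩ <;> constructor <;> linarith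
    have hm : MeasurableSet (Q m) := by rw [hQ]; exact measurableSet_Ico
    have hGx : Measurable fun y => G (x - y) := hG.comp (measurable_const.sub measurable_id)
    rw [← hmp.setLIntegral_comp_preimage hm hGx, hpre]
    simp only [sub_sub]
  simp only [shift]
  rw [lintegral_lintegral_swap]
  · refine lintegral_congr fun x => lintegral_congr fun y => ?_
    rw [← heven]
    push_cast
    congr 1
    ring
  · exact (hG.comp (by fun_prop : Measurable fun p : ℝ × ℝ => p.1 - p.2 - ((-n : ℤ) : ℝ) * lam)).aemeasurable

/-- The cells at index distance at least `k` only see `G` at distance at least `(k - 1) lam`. -/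
theorem tsum_tail_le {lam : ℝ} (hlam : 0 < lam) {Q : ℤ → Set ℝ}
    (hQ : ∀ n : ℤ, Q n = Set.Ico ((n : ℝ) * lam - lam / 2) ((n : ℝ) * lam + lam / 2))
    {G : ℝ → ℝ≥0∞} (hG : Measurable G) (k : ℕ) :
    ∑' n : ℤ, (if k ≤ n.natAbs then ∫⁻ x in Q 0, ∫⁻ y in Q n, G (x - y) else 0) ≤
      ENNReal.ofReal lam * ∫⁻ u in {u : ℝ | ((k : ℝ) - 1) * lam ≤ |u|}, G u := by
  have hm : MeasurableSet {u : ℝ | ((k : ℝ) - 1) * lam ≤ |u|} :=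
    measurableSet_le measurable_const measurable_norm
  rw [← lintegral_indicator hm, ← tsum_lintegral_cells hlam hQ (hG.indicator hm)]
  refine ENNReal.tsum_le_tsum fun n => ?_
  split_ifs with h
  · have hQm : ∀ n, MeasurableSet (Q n) := fun n => by rw [hQ]; exact measurableSet_Ico
    refine setLIntegral_mono' (hQm 0) fun x hx => setLIntegral_mono' (hQm n) fun y hy => ?_
    rw [Set.indicator_of_mem]
    rw [hQ] at hx hy
    have hk : (k : ℝ) ≤ |(n : ℝ)| := by
      rw [← Int.cast_abs, ← Nat.cast_natAbs]; exact_mod_cast h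
    have h3 : |n * lam| ≤ |x - y| + lam := by
      have : |x - y + n * lam| ≤ lam := by
        rw [abs_le]
        obtain ⟨h1, h2⟩ := hx
        obtain ⟨h3, h4⟩ := hy
        push_cast at h1 h2
        constructor <;> linarith
      have h5 := abs_sub (x - y + n * lam) (x - y)
      rw [show x - y + n * lam - (x - y) = n * lam by ring] at h5
      linarith
    rw [abs_mul, abs_of_pos hlam] at h3
    show ((k : ℝ) - 1) * lam ≤ |x - y|
    nlinarith
  · exact zero_le

/-- The iterated Bochner integrals of `f` are the iterated Lebesgue integrals, all of them finite. -/
theorem integral_cell_eq {f : ℝ → ℝ} (hf : Continuous f) (h0 : ∀ u, 0 ≤ f u)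
    (hfin : ∫⁻ u, ENNReal.ofReal (f u) ≠ ⊤) (S T : Set ℝ) :
    ∫ x in S, ∫ y in T, f (x - y) =
      (∫⁻ x in S, ∫⁻ y in T, ENNReal.ofReal (f (x - y))).toReal := by
  have hm : Measurable fun u => ENNReal.ofReal (f u) := hf.measurable.ennreal_ofReal
  have hlt : ∀ x, ∫⁻ y in T, ENNReal.ofReal (f (x - y)) < ⊤ := by
    intro x
    refine lt_of_le_of_lt (setLIntegral_le_lintegral _ _) ?_
    rw [lintegral_sub_left_eq_self (fun u => ENNReal.ofReal (f u)) x]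
    exact lt_top_iff_ne_top.2 hfin
  have hin : ∀ x, ∫ y in T, f (x - y) = (∫⁻ y in T, ENNReal.ofReal (f (x - y))).toReal := fun x =>
    integral_eq_lintegral_of_nonneg_ae (Filter.Eventually.of_forall fun y => h0 _)
      (hf.comp (continuous_const.sub continuous_id)).aestronglyMeasurable
  simp only [hin]
  refine integral_toReal ?_ (Filter.Eventually.of_forall hlt)
  exact ((hm.comp (measurable_fst.sub measurable_snd)).lintegral_prod_right').aemeasurable


/-! ### The cosine series -/

/-- The sine parts cancel by evenness of `a`, and the extra mass `∑ a` in `c 0` supplies the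
constant `1` in `1 - cos`. -/
theorem tsum_fourier_eq {a c : ℤ → ℝ} (hs : Summable a) (heven : ∀ n, a (-n) = a n)
    (hc0 : c 0 = ∑' n, a n - a 0) (hcn : ∀ n, n ≠ 0 → c n = -a n) (θ : ℝ) :
    ∑' n : ℤ, (c n : ℂ) * Complex.exp (2 * Real.pi * Complex.I * n * θ) =
      ((∑' n : ℤ, a n * (1 - Real.cos (2 * Real.pi * n * θ)) : ℝ) : ℂ) := by
  have hsn : Summable fun n => ‖a n‖ := hs.norm
  have hcos : Summable fun n : ℤ => a n * Real.cos (2 * Real.pi * n * θ) :=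
    Summable.of_norm_bounded hsn fun n => by
      rw [norm_mul]
      exact mul_le_of_le_one_right (norm_nonneg _) (Real.abs_cos_le_one _)
  have hsin : Summable fun n : ℤ => a n * Real.sin (2 * Real.pi * n * θ) :=
    Summable.of_norm_bounded hsn fun n => by
      rw [norm_mul]
      exact mul_le_of_le_one_right (norm_nonneg _) (Real.abs_sin_le_one _)
  have hsin0 : ∑' n : ℤ, a n * Real.sin (2 * Real.pi * n * θ) = 0 := by
    have h := (Equiv.neg ℤ).tsum_eq fun n : ℤ => a n * Real.sin (2 * Real.pi * n * θ)
    have h2 : ∀ n : ℤ, a (-n) * Real.sin (2 * Real.pi * ((-n : ℤ) : ℝ) * θ)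
        = -(a n * Real.sin (2 * Real.pi * n * θ)) := by
      intro n
      rw [heven, ← mul_neg, ← Real.sin_neg]
      push_cast
      congr 2
      ring
    simp only [Equiv.neg_apply, h2, tsum_neg] at h
    linarith
  have hdelta : HasSum (fun n : ℤ => if n = 0 then ((∑' m, a m : ℝ) : ℂ) else 0)
      ((∑' m, a m : ℝ) : ℂ) := hasSum_ite_eq 0 _
  have hA := (Complex.hasSum_ofReal.2 hcos.hasSum).add
    ((Complex.hasSum_ofReal.2 hsin.hasSum).mul_right Complex.I)
  have hB := hdelta.sub hA
  have hval : ∑' n : ℤ, a n * (1 - Real.cos (2 * Real.pi * n * θ)) =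
      ∑' n, a n - ∑' n : ℤ, a n * Real.cos (2 * Real.pi * n * θ) := by
    rw [← hs.tsum_sub hcos]
    exact tsum_congr fun n => by ring
  rw [hval]
  convert hB.tsum_eq using 1
  · refine tsum_congr fun n => ?_
    rw [show (2 * Real.pi * Complex.I * n * θ : ℂ) = ((2 * Real.pi * n * θ : ℝ) : ℂ) * Complex.I by
      push_cast; ring, Complex.exp_mul_I, ← Complex.ofReal_cos, ← Complex.ofReal_sin]
    by_cases hn : n = 0
    · subst hn
      simp [hc0]
    · rw [if_neg hn, hcn n hn]
      push_cast
      ring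
  · rw [hsin0]
    simp

theorem one_sub_cos_le (t : ℝ) (x : ℝ) :
    1 - Real.cos (2 * Real.pi * t * x) ≤ 2 * Real.pi ^ 2 * min 1 (t ^ 2 * x ^ 2) := by
  rw [mul_min_of_nonneg _ _ (by positivity), le_min_iff]
  constructor
  · nlinarith [Real.neg_one_le_cos (2 * Real.pi * t * x), Real.pi_gt_three]
  · nlinarith [Real.one_sub_sq_div_two_le_cos (x := 2 * Real.pi * t * x)]

/-! ### The Fourier transform of an indicator -/

section Indicator
open FourierTransform

theorem Fhat_eq_fourier {B : Set ℝ} (hB : MeasurableSet B) (ξ : ℝ) :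
    ∫ x in B, Complex.exp (-(2 * Real.pi * Complex.I) * x * ξ) =
      𝓕 (B.indicator fun _ => (1 : ℂ)) ξ := by
  rw [Real.fourier_eq', ← integral_indicator hB]
  refine integral_congr_ae (Filter.Eventually.of_forall fun x => ?_)
  by_cases hx : x ∈ B
  · simp [hx]
    congr 1
    ring
  · simp [hx]

theorem norm_Fhat_neg {B : Set ℝ} (ξ : ℝ) :
    ‖∫ x in B, Complex.exp (-(2 * Real.pi * Complex.I) * x * (-ξ : ℝ))‖ =
      ‖∫ x in B, Complex.exp (-(2 * Real.pi * Complex.I) * x * ξ)‖ := by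
  rw [← Complex.norm_conj, ← integral_conj]
  congr 2
  ext x
  rw [← Complex.exp_conj]
  simp [Complex.conj_ofNat]
end Indicator

/-! ### The spectral density -/

/-- Let `B ⊂ ℝ` be a bounded Borel set with `sup_{R>0} R ∫_{|ξ|≥R} |χ̂_B(ξ)|² dξ < ∞` and let
`c_n` be the covariances of particle numbers in the intervals `Q_n = nλ + [−λ/2, λ/2)` under
the determinantal point process with kernel `χ̂_B(x−y)`. Then the spectral density
`ω(θ) = ∑_n c_n e^{2πinθ}` is a real-valued continuous function on `𝕋 = [−1/2,1/2)` with
`ω(θ) = ω(−θ)`, `ω(0) = 0`, `|ω(θ)| ≤ C|θ|` for some `C > 0`, and `∫_𝕋 |ω|⁻¹ dm = ∞`. -/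
theorem spectral_density_vanishes_linearly_and_inverse_not_integrable
    (B : Set ℝ) (hBbdd : Bornology.IsBounded B) (hBmeas : MeasurableSet B)
    (Fhat : ℝ → ℂ)
    (hFhat : ∀ ξ : ℝ, Fhat ξ = ∫ x in B, Complex.exp (-(2 * Real.pi * Complex.I) * x * ξ))
    (htail : ∃ C : ℝ, ∀ R : ℝ, 0 < R →
      ENNReal.ofReal R * ∫⁻ ξ in {ξ : ℝ | R ≤ |ξ|}, ENNReal.ofReal (‖Fhat ξ‖ ^ 2)
        ≤ ENNReal.ofReal C)
    (lam : ℝ) (hlam : 0 < lam)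
    (Q : ℤ → Set ℝ)
    (hQ : ∀ n : ℤ, Q n = Set.Ico ((n : ℝ) * lam - lam / 2) ((n : ℝ) * lam + lam / 2))
    (c : ℤ → ℝ)
    (hc0 : c 0 = lam * (volume B).toReal - ∫ x in Q 0, ∫ y in Q 0, ‖Fhat (x - y)‖ ^ 2)
    (hcn : ∀ n : ℤ, n ≠ 0 → c n = -∫ x in Q 0, ∫ y in Q n, ‖Fhat (x - y)‖ ^ 2)
    (ω : ℝ → ℂ)
    (hω : ∀ θ : ℝ, ω θ = ∑' n : ℤ, (c n : ℂ) * Complex.exp (2 * Real.pi * Complex.I * n * θ)) :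
    (∀ θ : ℝ, (ω θ).im = 0) ∧ Continuous ω ∧ (∀ θ : ℝ, ω (-θ) = ω θ) ∧ ω 0 = 0 ∧
      (∃ C : ℝ, 0 < C ∧ ∀ θ ∈ Set.Ico (-(1/2) : ℝ) (1/2), ‖ω θ‖ ≤ C * |θ|) ∧
      ∫⁻ θ in Set.Ico (-(1/2) : ℝ) (1/2), (ENNReal.ofReal ‖ω θ‖)⁻¹ = ⊤ := by
  obtain ⟨C, hC⟩ := htail
  have hBfin : volume B < ⊤ := hBbdd.measure_lt_top
  have hi1 : Integrable (B.indicator fun _ => (1 : ℂ)) :=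
    (integrable_indicator_iff hBmeas).2 (integrableOn_const hBfin.ne)
  have hi2 : MemLp (B.indicator fun _ => (1 : ℂ)) 2 :=
    memLp_indicator_const 2 hBmeas 1 (Or.inr hBfin.ne)
  have hFF : Fhat = FourierTransform.fourier (B.indicator fun _ => (1 : ℂ)) := by
    funext ξ
    rw [hFhat, Fhat_eq_fourier hBmeas]
  have hFcont : Continuous Fhat := by
    rw [hFF]
    exact VectorFourier.fourierIntegral_continuous Real.continuous_fourierChar
      (by exact continuous_inner) hi1
  set f : ℝ → ℝ := fun u => ‖Fhat u‖ ^ 2 with hf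
  set G : ℝ → ℝ≥0∞ := fun u => ENNReal.ofReal (f u) with hG
  have hfcont : Continuous f := by fun_prop
  have hGm : Measurable G := hfcont.measurable.ennreal_ofReal
  have hGeven : ∀ u, G (-u) = G u := by
    intro u
    simp only [hG, hf, hFhat, norm_Fhat_neg]
  have hGint : ∫⁻ u, G u = volume B := by
    simp only [hG, hf, hFF]
    rw [lintegral_fourier_sq hi1 hi2, ← lintegral_indicator_one hBmeas]
    refine lintegral_congr fun x => ?_
    by_cases hx : x ∈ B <;> simp [hx]
  have hGfin : ∫⁻ u, G u ≠ ⊤ := by rw [hGint]; exact hBfin.ne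
  set A : ℤ → ℝ≥0∞ := fun n => ∫⁻ x in Q 0, ∫⁻ y in Q n, G (x - y) with hA
  have hAsum : ∑' n, A n = ENNReal.ofReal lam * volume B := by
    rw [hA, tsum_lintegral_cells hlam hQ hGm, hGint]
  have hAsumfin : ∑' n, A n ≠ ⊤ := by
    rw [hAsum]
    exact ENNReal.mul_ne_top ENNReal.ofReal_ne_top hBfin.ne
  have hAfin : ∀ n, A n ≠ ⊤ := ENNReal.ne_top_of_tsum_ne_top hAsumfin
  set a : ℤ → ℝ := fun n => (A n).toReal with ha
  have ha0 : ∀ n, 0 ≤ a n := fun n => ENNReal.toReal_nonneg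
  have has : Summable a := ENNReal.summable_toReal hAsumfin
  have hasum : ∑' n, a n = lam * (volume B).toReal := by
    rw [ha, ← ENNReal.tsum_toReal_eq hAfin, hAsum, ENNReal.toReal_mul,
      ENNReal.toReal_ofReal hlam.le]
  have haeven : ∀ n, a (-n) = a n := fun n =>
    congrArg ENNReal.toReal (lintegral_cell_neg hQ hGm hGeven n)
  have hint : ∀ n, ∫ x in Q 0, ∫ y in Q n, ‖Fhat (x - y)‖ ^ 2 = a n := fun n =>
    integral_cell_eq hfcont (fun u => by positivity) hGfin (Q 0) (Q n)
  have hc0' : c 0 = ∑' n, a n - a 0 := by rw [hc0, hint, hasum]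
  have hcn' : ∀ n, n ≠ 0 → c n = -a n := fun n hn => by rw [hcn n hn, hint]
  have hω' : ∀ θ, ω θ = ((∑' n : ℤ, a n * (1 - Real.cos (2 * Real.pi * n * θ)) : ℝ) : ℂ) :=
    fun θ => by rw [hω, tsum_fourier_eq has haeven hc0' hcn']
  set D : ℝ := 2 * max C 0 + lam * (volume B).toReal with hD
  have hD0 : 0 ≤ D := by positivity
  have htl : ∀ k : ℕ, 1 ≤ k → ∑' n : ℤ, (if k ≤ n.natAbs then a n else 0) ≤ D / k := by
    intro k hk
    have hk0 : (0 : ℝ) < k := by exact_mod_cast hk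
    set J : ℝ≥0∞ := ENNReal.ofReal lam * ∫⁻ u in {u : ℝ | ((k : ℝ) - 1) * lam ≤ |u|}, G u with hJ
    have hJle : J ≤ ENNReal.ofReal lam * volume B := by
      rw [← hGint]
      exact mul_le_mul_right (setLIntegral_le_lintegral _ _) _
    have hJfin : J ≠ ⊤ := ne_top_of_le_ne_top (by rwa [← hAsum]) hJle
    have h1 : ∑' n : ℤ, (if k ≤ n.natAbs then a n else 0) ≤ J.toReal := by
      have e : ∀ n : ℤ, (if k ≤ n.natAbs then a n else 0)
          = (if k ≤ n.natAbs then A n else 0).toReal := fun n => by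
        split_ifs <;> simp [ha]
      rw [tsum_congr e, ← ENNReal.tsum_toReal_eq fun n => by split_ifs <;> simp [hAfin]]
      exact ENNReal.toReal_mono hJfin (tsum_tail_le hlam hQ hGm k)
    refine h1.trans ?_
    -- `k J = (k - 1) J + J`; the tail hypothesis at `R = (k - 1) lam` bounds the first term, but says
    -- nothing for `k = 1`, where the total mass is used.
    have h2 : J.toReal ≤ lam * (volume B).toReal := by
      rw [← ENNReal.toReal_ofReal hlam.le, ← ENNReal.toReal_mul]
      exact ENNReal.toReal_mono (by rwa [← hAsum]) hJle
    have h3 : ((k : ℝ) - 1) * J.toReal ≤ max C 0 := by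
      rcases eq_or_lt_of_le hk with h | h
      · rw [← h]; simp
      · have hk1 : (0 : ℝ) < (k : ℝ) - 1 := by
          have : (1 : ℝ) < k := by exact_mod_cast h
          linarith
        have := hC (((k : ℝ) - 1) * lam) (by positivity)
        rw [ENNReal.ofReal_mul hk1.le, mul_assoc] at this
        have := ENNReal.toReal_mono ENNReal.ofReal_ne_top this
        rw [ENNReal.toReal_mul, ENNReal.toReal_ofReal hk1.le, ENNReal.toReal_ofReal'] at this
        exact this
    rw [le_div_iff₀ hk0]
    have hmax : 0 ≤ max C 0 := le_max_right _ _
    linarith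
  have hnn : ∀ (n : ℤ) (θ : ℝ), 0 ≤ a n * (1 - Real.cos (2 * Real.pi * n * θ)) := fun n θ =>
    mul_nonneg (ha0 n) (by linarith [Real.cos_le_one (2 * Real.pi * n * θ)])
  have hzero : ω 0 = 0 := by rw [hω']; simp
  have hbound : ∀ θ ∈ Set.Ico (-(1/2) : ℝ) (1/2), ‖ω θ‖ ≤ (8 * Real.pi ^ 2 * D + 1) * |θ| := by
    intro θ hθ
    by_cases h0 : θ = 0
    · rw [h0, hzero]; simp
    have h1 : |θ| ≤ 1 := abs_le.2 ⟨by linarith [hθ.1], by linarith [hθ.2]⟩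
    have hmin : Summable fun n : ℤ => a n * min 1 ((n : ℝ) ^ 2 * θ ^ 2) :=
      Summable.of_nonneg_of_le (fun n => mul_nonneg (ha0 n) (by positivity))
        (fun n => mul_le_of_le_one_right (ha0 n) (min_le_left _ _)) has
    have hle : ∀ n : ℤ, a n * (1 - Real.cos (2 * Real.pi * n * θ)) ≤
        2 * Real.pi ^ 2 * (a n * min 1 ((n : ℝ) ^ 2 * θ ^ 2)) := fun n => by
      have := mul_le_mul_of_nonneg_left (one_sub_cos_le n θ) (ha0 n)
      linarith
    have h2 := hmin.mul_left (2 * Real.pi ^ 2)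
    rw [hω', Complex.norm_real, Real.norm_of_nonneg (tsum_nonneg fun n => hnn n θ)]
    calc _ ≤ ∑' n : ℤ, 2 * Real.pi ^ 2 * (a n * min 1 ((n : ℝ) ^ 2 * θ ^ 2)) :=
          Summable.tsum_le_tsum hle (Summable.of_nonneg_of_le (fun n => hnn n θ) hle h2) h2
      _ = 2 * Real.pi ^ 2 * ∑' n : ℤ, a n * min 1 ((n : ℝ) ^ 2 * θ ^ 2) := tsum_mul_left
      _ ≤ 2 * Real.pi ^ 2 * (4 * D * |θ|) := by
          gcongr
          exact tsum_mul_min_le ha0 has hD0 htl h0 h1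
      _ ≤ _ := by linarith [abs_nonneg θ]
  have hCpos : 0 < 8 * Real.pi ^ 2 * D + 1 := by positivity
  refine ⟨fun θ => by rw [hω', Complex.ofReal_im], ?_, fun θ => ?_, hzero, ⟨_, hCpos, hbound⟩,
    lintegral_inv_eq_top_of_linear_bound hCpos hbound⟩
  · rw [funext hω']
    refine Complex.continuous_ofReal.comp (continuous_tsum (u := fun n => 2 * a n)
      (fun n => by fun_prop) (has.mul_left 2) fun n θ => ?_)
    rw [Real.norm_of_nonneg (hnn n θ)]
    nlinarith [ha0 n, Real.neg_one_le_cos (2 * Real.pi * n * θ)]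
  · rw [hω', hω']
    simp only [mul_neg, Real.cos_neg]
end

section
/- Let K_S(x, y) = (sin(π(x_1−y_1))/(π(x_1−y_1)))·(sin(π(x_2−y_2))/(π(x_2−y_2))) for x = (x_1,x_2), y = (y_1,y_2) ∈ ℝ² (with the convention sin(πt)/(πt) = 1 at t = 0), and for n ∈ ℤ² let S_n = S_0 × (n + S_0) where S_0 = [−1/2, 1/2)². Define Fourier coefficients a_0 = 1 − ∫_{S_0×S_0} |K_S(x,y)|² dx dy and a_n = −∫_{S_n} |K_S(x,y)|² dx dy for n ≠ 0, and set ω(θ_1, θ_2) = ∑_{n∈ℤ²} a_n e^{2πi(n_1θ_1 + n_2θ_2)}. Then there exists c > 0 such that ω(θ_1, θ_2) ≥ c(|θ_1| + |θ_2|) for all θ_1, θ_2 ∈ (−1/2, 1/2). -/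
/-!
The integrals factorize: `I n = b (n.1) * b (n.2)`, where `b = cellMass` integrates
`sinc² (π (x - y))` over a unit square translated by an integer. Hence
`ω θ₁ θ₂ = 1 - F θ₁ * F θ₂` with `F θ = ∑ b k * exp (2πikθ)`, and it suffices to show
`‖F θ‖ ≤ 1 - |θ| / 8` (`norm_tsum_cellMass_le'`).

Parseval's identity for `exp (2πitx)` on `[-1/2, 1/2]`, whose Fourier coefficients are
`sinc (π (t - k))`, gives `∑ b k ≤ 1`. The mean value of `sin²` gives `b k ≥ m k`, where
`m k = 1 / (8π²k²)` for `k ≠ 0` and `m 0 = 1/32`. Bounding the remainder `b - m ≥ 0` by its mass,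
`‖F θ‖ ≤ |M θ| + 1 - M 0` with `M θ = ∑ m k * exp (2πikθ)`. By the Fourier expansion of the second
Bernoulli polynomial, `M θ = 1/32 + (θ² - θ + 1/6) / 4` on `[0, 1]`. This is positive, and
`M 0 - M θ = θ (1 - θ) / 4` decays linearly at both endpoints.
-/

open MeasureTheory Complex Real ENNReal

/-! ### Mass of the squared sine kernel on translated cells -/

/-- The integral of `sinc² (π (x - y))` over the unit square `x ∈ [-1/2, 1/2]`,
`y ∈ [k - 1/2, k + 1/2]`, written with `y = u + k`. -/
noncomputable def cellMass (k : ℤ) : ℝ :=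
  ∫ x in (-(1/2) : ℝ)..(1/2), ∫ u in (-(1/2) : ℝ)..(1/2), sinc (π * (x - (u + k))) ^ 2

/-- The Fourier coefficients of `x ↦ exp (2πitx)` on `[-1/2, 1/2]` are sinc values. -/
lemma fourierCoeffOn_exp (t : ℝ) (k : ℤ) :
    fourierCoeffOn (show (-(1/2) : ℝ) < 1/2 by norm_num)
      (fun x : ℝ => Complex.exp (2 * π * Complex.I * t * x)) k = (sinc (π * (t - k)) : ℂ) := by
  rw [fourierCoeffOn_eq_integral]
  have h1 : ∀ x : ℝ, (fourier (-k) (x : AddCircle ((1/2 : ℝ) - -(1/2))) : ℂ) •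
      Complex.exp (2 * π * Complex.I * t * x)
      = Complex.exp (((x * (2 * π * (t - k)) : ℝ) : ℂ) * Complex.I) := by
    intro x
    rw [fourier_coe_apply, smul_eq_mul, ← Complex.exp_add]
    congr 1
    push_cast
    norm_num
    ring
  simp_rw [h1]
  by_cases h : t - k = 0
  · simp [h]; norm_num
  · have hc : 2 * π * (t - k) ≠ 0 := by positivity
    have hd : (t : ℂ) - k ≠ 0 := by exact_mod_cast h
    have := intervalIntegral.integral_comp_mul_right (a := -(1/2 : ℝ)) (b := 1/2)
      (fun y : ℝ => Complex.exp ((y : ℂ) * Complex.I)) hc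
    rw [this]
    have e1 : -(1/2 : ℝ) * (2 * π * (t - k)) = -(π * (t - k)) := by ring
    have e2 : (1/2 : ℝ) * (2 * π * (t - k)) = π * (t - k) := by ring
    rw [e1, e2, integral_exp_mul_I_eq_sinc]
    rw [Complex.real_smul, Complex.real_smul]
    push_cast
    norm_num
    field_simp

/-- Parseval's identity for `x ↦ exp (2πitx)` on `[-1/2, 1/2]`. -/
lemma sum_sinc_sq_le_one (t : ℝ) (F : Finset ℤ) :
    ∑ k ∈ F, sinc (π * (t - k)) ^ 2 ≤ 1 := by
  have hcont : Continuous fun x : ℝ => Complex.exp (2 * π * Complex.I * t * x) := by fun_prop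
  have hn : ∀ x : ℝ, ‖Complex.exp (2 * π * Complex.I * t * x)‖ = 1 := by
    intro x
    have : 2 * π * Complex.I * t * x = ((2 * π * t * x : ℝ) : ℂ) * Complex.I := by
      push_cast; ring
    rw [this, Complex.norm_exp_ofReal_mul_I]
  have h := hasSum_sq_fourierCoeffOn (f := fun x : ℝ => Complex.exp (2 * π * Complex.I * t * x))
    (show (-(1/2) : ℝ) < 1/2 by norm_num)
    (MemLp.of_bound hcont.aestronglyMeasurable 1 (Filter.Eventually.of_forall fun x => (hn x).le))
  simp_rw [fourierCoeffOn_exp, hn, Complex.norm_real, Real.norm_eq_abs, sq_abs] at h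
  have h2 := sum_le_hasSum F (fun i _ => sq_nonneg _) h
  norm_num at h2
  exact h2

lemma continuous_inner_cell (k : ℤ) : Continuous fun x : ℝ =>
    ∫ u in (-(1/2) : ℝ)..(1/2), sinc (π * (x - (u + k))) ^ 2 := by
  apply intervalIntegral.continuous_parametric_intervalIntegral_of_continuous'
  have := continuous_sinc
  fun_prop

lemma sum_cellMass_le_one (F : Finset ℤ) : ∑ k ∈ F, cellMass k ≤ 1 := by
  have hs := continuous_sinc
  unfold cellMass
  rw [← intervalIntegral.integral_finsetSum
    fun k _ => (continuous_inner_cell k).intervalIntegrable _ _]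
  have hin : ∀ x : ℝ, ∑ k ∈ F, ∫ u in (-(1/2) : ℝ)..(1/2), sinc (π * (x - (u + k))) ^ 2 ≤ 1 := by
    intro x
    rw [← intervalIntegral.integral_finsetSum
      fun (k : ℤ) _ => (by fun_prop : Continuous fun u : ℝ =>
        sinc (π * (x - (u + (k : ℝ)))) ^ 2).intervalIntegrable _ _]
    calc _ ≤ ∫ u in (-(1/2) : ℝ)..(1/2), (1 : ℝ) := by
          apply intervalIntegral.integral_mono_on (by norm_num)
            ((by fun_prop : Continuous _).intervalIntegrable _ _) (by simp)
          intro u _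
          have := sum_sinc_sq_le_one (x - u) F
          simpa [sub_sub] using this
      _ = 1 := by norm_num
  calc _ ≤ ∫ x in (-(1/2) : ℝ)..(1/2), (1 : ℝ) := by
        apply intervalIntegral.integral_mono_on (by norm_num) _ (by simp) (fun x _ => hin x)
        exact (continuous_finsetSum _ fun k _ =>
          continuous_inner_cell k).intervalIntegrable _ _
    _ = 1 := by norm_num

lemma cellMass_nonneg (k : ℤ) : 0 ≤ cellMass k := by
  apply intervalIntegral.integral_nonneg (by norm_num)
  intro x _
  apply intervalIntegral.integral_nonneg (by norm_num)
  intro u _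
  positivity

/-- For `x, u` in the unit interval, `|x - u - k| ≤ |k| + 1`, while `sin² (π (x - u - k))` has
mean `1/2` over a unit interval. -/
lemma le_cellMass (k : ℤ) : 1 / (2 * π ^ 2 * (|(k : ℝ)| + 1) ^ 2) ≤ cellMass k := by
  have hs := continuous_sinc
  set C : ℝ := 1 / (π ^ 2 * (|(k : ℝ)| + 1) ^ 2) with hC
  have hC0 : 0 ≤ C := by positivity
  have hpt : ∀ x ∈ Set.Icc (-(1/2) : ℝ) (1/2), ∀ u ∈ Set.Icc (-(1/2) : ℝ) (1/2),
      C * Real.sin (π * (x - (u + k))) ^ 2 ≤ sinc (π * (x - (u + k))) ^ 2 := by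
    intro x hx u hu
    set s := x - (u + k) with hsdef
    by_cases h0 : s = 0
    · simp [h0]
    have hsk : |s| ≤ |(k : ℝ)| + 1 := by
      have h1 := le_abs_self (k : ℝ)
      have h2 := neg_abs_le (k : ℝ)
      rw [abs_le]
      constructor <;> linarith [hx.1, hx.2, hu.1, hu.2]
    have hs2 : s ^ 2 ≤ (|(k : ℝ)| + 1) ^ 2 := by
      rw [← sq_abs s]; gcongr
    have hs0 : 0 < s ^ 2 := by positivity
    rw [sinc_of_ne_zero (by positivity), div_pow, hC, mul_pow, one_div, inv_mul_eq_div]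
    gcongr
  have hin : ∀ x ∈ Set.Icc (-(1/2) : ℝ) (1/2),
      C / 2 ≤ ∫ u in (-(1/2) : ℝ)..(1/2), sinc (π * (x - (u + k))) ^ 2 := by
    intro x hx
    have hval : ∫ u in (-(1/2) : ℝ)..(1/2), C * Real.sin (π * (x - (u + k))) ^ 2 = C / 2 := by
      rw [intervalIntegral.integral_const_mul]
      have h1 := intervalIntegral.integral_comp_sub_mul (a := -(1/2 : ℝ)) (b := 1/2)
        (fun y : ℝ => Real.sin y ^ 2) Real.pi_ne_zero (π * (x - k))
      have h2 : ∀ u : ℝ, π * (x - (u + k)) = π * (x - k) - π * u := by intro u; ring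
      simp_rw [h2]
      rw [h1, integral_sin_sq]
      have h3 : π * (x - k) - π * -(1/2) = (π * (x - k) - π * (1/2)) + π := by ring
      rw [h3, Real.sin_add_pi, Real.cos_add_pi, smul_eq_mul]
      field_simp
      ring
    rw [← hval]
    exact intervalIntegral.integral_mono_on (by norm_num)
      ((by fun_prop : Continuous _).intervalIntegrable _ _)
      ((by fun_prop : Continuous _).intervalIntegrable _ _) (hpt x hx)
  calc 1 / (2 * π ^ 2 * (|(k : ℝ)| + 1) ^ 2) = ∫ x in (-(1/2) : ℝ)..(1/2), C / 2 := by
        rw [intervalIntegral.integral_const, hC]; norm_num; ring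
    _ ≤ cellMass k := by
        apply intervalIntegral.integral_mono_on (by norm_num) (by simp)
          ((continuous_inner_cell k).intervalIntegrable _ _) hin

lemma summable_cellMass : Summable cellMass :=
  summable_of_sum_le cellMass_nonneg sum_cellMass_le_one

lemma tsum_cellMass_le_one : ∑' k, cellMass k ≤ 1 :=
  summable_cellMass.tsum_le_of_sum_le sum_cellMass_le_one

/-! ### The one-dimensional bound `‖F θ‖ ≤ 1 - |θ| / 8` -/

/-- The comparison sequence `1 / (8π²k²)`, with the value `1/32` at `k = 0`. Its Fourier series is,
up to an additive constant, a multiple of the second Bernoulli polynomial. -/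
noncomputable def minorant (k : ℤ) : ℝ :=
  (if k = 0 then 1/32 else 0) + 1 / (8 * π ^ 2) * (1 / (k : ℝ) ^ 2)

lemma minorant_nonneg (k : ℤ) : 0 ≤ minorant k := by
  unfold minorant; split_ifs <;> positivity

lemma minorant_le_cellMass (k : ℤ) : minorant k ≤ cellMass k := by
  refine le_trans ?_ (le_cellMass k)
  unfold minorant
  by_cases h : k = 0
  · subst h
    have := Real.pi_lt_four
    have h4 : π ^ 2 ≤ 16 := by nlinarith [Real.pi_pos]
    -- the second summand vanishes because `1 / 0 = 0`
    simp only [if_true, Int.cast_zero, abs_zero]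
    norm_num
    rw [inv_mul_eq_div, le_div_iff₀ (by positivity)]
    linarith
  · have h1 : (1 : ℝ) ≤ |(k : ℝ)| := by exact_mod_cast Int.one_le_abs h
    rw [if_neg h, zero_add, ← one_div_mul_one_div_rev, ← one_div_mul_one_div_rev,
      ← sq_abs (k : ℝ)]
    have : (|(k : ℝ)| + 1) ^ 2 ≤ 4 * |(k : ℝ)| ^ 2 := by nlinarith
    have hp := Real.pi_pos
    calc _ = 1 / (2 * π ^ 2 * (4 * |(k : ℝ)| ^ 2)) := by
          field_simp; norm_num
      _ ≤ 1 / (2 * π ^ 2 * (|(k : ℝ)| + 1) ^ 2) := by gcongr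
      _ = _ := by field_simp

/-- The character `k ↦ exp (2πikθ)`. -/
noncomputable def chr (θ : ℝ) (k : ℤ) : ℂ := Complex.exp (2 * π * Complex.I * (k * θ))

lemma norm_chr (θ : ℝ) (k : ℤ) : ‖chr θ k‖ = 1 := by
  unfold chr
  have : 2 * π * Complex.I * (k * θ) = ((2 * π * (k * θ) : ℝ) : ℂ) * Complex.I := by
    push_cast; ring
  rw [this, Complex.norm_exp_ofReal_mul_I]

lemma chr_add_one (θ : ℝ) (k : ℤ) : chr (θ + 1) k = chr θ k := by
  unfold chr
  rw [Complex.exp_eq_exp_iff_exists_int]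
  exact ⟨k, by push_cast; ring⟩

/-- The Fourier expansion of the second Bernoulli polynomial `x² - x + 1/6`, shifted by the
`k = 0` term. -/
lemma hasSum_minorant {x : ℝ} (hx : x ∈ Set.Icc (0 : ℝ) 1) :
    HasSum (fun k : ℤ => (minorant k : ℂ) * chr x k)
      ((1/32 + (x ^ 2 - x + 1/6) / 4 : ℝ) : ℂ) := by
  have h := (hasSum_one_div_pow_mul_fourier_mul_bernoulliFun (le_refl 2) hx).mul_left
    (1 / (8 * (π : ℂ) ^ 2))
  have h0 := hasSum_ite_eq (0 : ℤ) (1/32 : ℂ)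
  convert h0.add h using 1
  · ext k
    rw [fourier_coe_apply]
    have e : Complex.exp (2 * π * Complex.I * k * x / (1 : ℝ)) = chr x k := by
      unfold chr; congr 1; push_cast; ring
    rw [e]
    unfold minorant
    split_ifs with hk
    · subst hk; simp [chr]
    · push_cast; ring
  · rw [bernoulliFun_two]
    have hp : (π : ℂ) ≠ 0 := by exact_mod_cast Real.pi_ne_zero
    have hI : (2 * (π : ℂ) * Complex.I) ^ 2 = -(4 * π ^ 2) := by
      rw [mul_pow, Complex.I_sq]; ring
    rw [hI]
    push_cast
    norm_num
    field_simp
    ring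

lemma summable_minorant : Summable minorant :=
  Summable.of_nonneg_of_le minorant_nonneg minorant_le_cellMass summable_cellMass

lemma summable_mul_chr {f : ℤ → ℝ} (hf : Summable f) (θ : ℝ) :
    Summable fun k => ‖(f k : ℂ) * chr θ k‖ := by
  simpa [norm_chr] using hf.abs

/-- Splitting `cellMass` into `minorant` and a nonnegative remainder: the remainder is bounded
by its total mass, and the part coming from `minorant` is explicit and positive. -/
lemma norm_tsum_cellMass_le {x : ℝ} (hx : x ∈ Set.Icc (0 : ℝ) 1) :
    ‖∑' k : ℤ, (cellMass k : ℂ) * chr x k‖ ≤ 1 - x * (1 - x) / 4 := by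
  have hsr : Summable fun k => cellMass k - minorant k := summable_cellMass.sub summable_minorant
  have hD := hasSum_minorant hx
  have hD0 : HasSum minorant (1/32 + 1/24) := by
    have h := hasSum_minorant (x := 0) (by simp)
    have h' : HasSum (fun k => (minorant k : ℂ)) ((1/32 + 1/24 : ℝ) : ℂ) := by
      convert h using 1
      · ext k; simp [chr]
      · norm_num
    exact_mod_cast h'
  have hR := (summable_mul_chr hsr x)
  have hsplit : ∑' k : ℤ, (cellMass k : ℂ) * chr x k
      = ((1/32 + (x ^ 2 - x + 1/6) / 4 : ℝ) : ℂ)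
        + ∑' k : ℤ, ((cellMass k - minorant k : ℝ) : ℂ) * chr x k := by
    rw [← hD.tsum_eq, ← hD.summable.tsum_add hR.of_norm]
    congr 1; ext k; push_cast; ring
  have hRn : ‖∑' k : ℤ, ((cellMass k - minorant k : ℝ) : ℂ) * chr x k‖
      ≤ 1 - (1/32 + 1/24) := by
    refine (norm_tsum_le_tsum_norm hR).trans ?_
    have : ∀ k, ‖((cellMass k - minorant k : ℝ) : ℂ) * chr x k‖ = cellMass k - minorant k := by
      intro k
      rw [norm_mul, norm_chr, mul_one, Complex.norm_real, Real.norm_eq_abs,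
        abs_of_nonneg (sub_nonneg.2 (minorant_le_cellMass k))]
    simp_rw [this]
    rw [summable_cellMass.tsum_sub summable_minorant, hD0.tsum_eq]
    linarith [tsum_cellMass_le_one]
  rw [hsplit]
  refine (norm_add_le _ _).trans ?_
  rw [Complex.norm_real, Real.norm_eq_abs, abs_of_nonneg (by nlinarith [sq_nonneg (x - 1/2)])]
  linarith

lemma norm_tsum_cellMass_le' {θ : ℝ} (hθ : θ ∈ Set.Ioo (-(1/2) : ℝ) (1/2)) :
    ‖∑' k : ℤ, (cellMass k : ℂ) * chr θ k‖ ≤ 1 - |θ| / 8 := by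
  obtain ⟨h1, h2⟩ := hθ
  rcases le_total 0 θ with h | h
  · refine (norm_tsum_cellMass_le ⟨h, by linarith⟩).trans ?_
    rw [abs_of_nonneg h]; nlinarith
  · simp_rw [← chr_add_one θ]
    refine (norm_tsum_cellMass_le (x := θ + 1) ⟨by linarith, by linarith⟩).trans ?_
    rw [abs_of_nonpos h]; nlinarith

/-! ### Reduction to one dimension -/

/-- The integral over a translated cell factorizes over the two coordinates. -/
lemma integral_cell_eq_s9 (n : ℤ × ℤ) :
    ∫ x in Set.Ico (-(1/2) : ℝ) (1/2) ×ˢ Set.Ico (-(1/2) : ℝ) (1/2),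
      ∫ y in (fun z : ℝ × ℝ => ((n.1 : ℝ) + z.1, (n.2 : ℝ) + z.2)) ''
        (Set.Ico (-(1/2) : ℝ) (1/2) ×ˢ Set.Ico (-(1/2) : ℝ) (1/2)),
        (sinc (π * (x.1 - y.1)) * sinc (π * (x.2 - y.2))) ^ 2
      = cellMass n.1 * cellMass n.2 := by
  have himg : (fun z : ℝ × ℝ => ((n.1 : ℝ) + z.1, (n.2 : ℝ) + z.2)) ''
        (Set.Ico (-(1/2) : ℝ) (1/2) ×ˢ Set.Ico (-(1/2) : ℝ) (1/2))
      = Set.Ico (-(1/2) + n.1 : ℝ) (1/2 + n.1) ×ˢ Set.Ico (-(1/2) + n.2 : ℝ) (1/2 + n.2) := by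
    have := Set.prodMap_image_prod (fun z : ℝ => (n.1 : ℝ) + z) (fun z : ℝ => (n.2 : ℝ) + z)
      (Set.Ico (-(1/2) : ℝ) (1/2)) (Set.Ico (-(1/2) : ℝ) (1/2))
    simp only [Set.image_const_add_Ico] at this
    rw [add_comm _ (n.1 : ℝ), add_comm _ (n.1 : ℝ), add_comm _ (n.2 : ℝ), add_comm _ (n.2 : ℝ),
      ← this]
    rfl
  have hcell : ∀ k : ℤ, cellMass k = ∫ x in Set.Ico (-(1/2) : ℝ) (1/2),
      ∫ y in Set.Ico (-(1/2) + k : ℝ) (1/2 + k), sinc (π * (x - y)) ^ 2 := by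
    intro k
    unfold cellMass
    rw [intervalIntegral.integral_of_le (by norm_num), integral_Ico_eq_integral_Ioc]
    congr 1; ext x
    rw [intervalIntegral.integral_comp_add_right (fun y => sinc (π * (x - y)) ^ 2),
      intervalIntegral.integral_of_le (by linarith), integral_Ico_eq_integral_Ioc]
  rw [himg]
  simp_rw [mul_pow, Measure.volume_eq_prod]
  have hin : ∀ x : ℝ × ℝ, ∫ y in Set.Ico (-(1/2) + n.1 : ℝ) (1/2 + n.1) ×ˢ
        Set.Ico (-(1/2) + n.2 : ℝ) (1/2 + n.2),
        sinc (π * (x.1 - y.1)) ^ 2 * sinc (π * (x.2 - y.2)) ^ 2 ∂(volume.prod volume)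
      = (∫ y in Set.Ico (-(1/2) + n.1 : ℝ) (1/2 + n.1), sinc (π * (x.1 - y)) ^ 2)
        * ∫ y in Set.Ico (-(1/2) + n.2 : ℝ) (1/2 + n.2), sinc (π * (x.2 - y)) ^ 2 :=
    fun x => setIntegral_prod_mul (fun y => sinc (π * (x.1 - y)) ^ 2)
      (fun y => sinc (π * (x.2 - y)) ^ 2) _ _
  simp_rw [hin]
  rw [hcell, hcell]
  exact setIntegral_prod_mul
    (fun x => ∫ y in Set.Ico (-(1/2) + n.1 : ℝ) (1/2 + n.1), sinc (π * (x - y)) ^ 2)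
    (fun x => ∫ y in Set.Ico (-(1/2) + n.2 : ℝ) (1/2 + n.2), sinc (π * (x - y)) ^ 2) _ _

/-- The spectral density `ω` of the stationary process of particle numbers in unit cubes of the
determinantal point process with kernel the tensor square `K_S` of the Dyson sine kernel
satisfies `ω(θ₁,θ₂) ≥ c(|θ₁|+|θ₂|)` for some `c > 0` and all `θ₁, θ₂ ∈ (−1/2,1/2)`. -/
theorem sine_tensor_spectral_density_lower_bound
    (K : ℝ × ℝ → ℝ × ℝ → ℝ)
    (hK : ∀ x y : ℝ × ℝ, K x y =
      (if x.1 - y.1 = 0 then 1 else Real.sin (Real.pi * (x.1 - y.1)) / (Real.pi * (x.1 - y.1))) *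
      (if x.2 - y.2 = 0 then 1 else Real.sin (Real.pi * (x.2 - y.2)) / (Real.pi * (x.2 - y.2))))
    (S₀ : Set (ℝ × ℝ)) (hS₀ : S₀ = Set.Ico (-(1/2) : ℝ) (1/2) ×ˢ Set.Ico (-(1/2) : ℝ) (1/2))
    (I : ℤ × ℤ → ℝ)
    (hI : ∀ n : ℤ × ℤ, I n =
      ∫ x in S₀, ∫ y in (fun z : ℝ × ℝ => ((n.1 : ℝ) + z.1, (n.2 : ℝ) + z.2)) '' S₀, (K x y) ^ 2)
    (a : ℤ × ℤ → ℝ) (ha0 : a 0 = 1 - I 0) (han : ∀ n : ℤ × ℤ, n ≠ 0 → a n = -(I n))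
    (ω : ℝ → ℝ → ℝ)
    (hω : ∀ θ₁ θ₂ : ℝ, ω θ₁ θ₂ = (∑' n : ℤ × ℤ,
      (a n : ℂ) * Complex.exp (2 * Real.pi * Complex.I * ((n.1 : ℂ) * θ₁ + (n.2 : ℂ) * θ₂))).re) :
    ∃ c : ℝ, 0 < c ∧ ∀ θ₁ ∈ Set.Ioo (-(1/2) : ℝ) (1/2), ∀ θ₂ ∈ Set.Ioo (-(1/2) : ℝ) (1/2),
      c * (|θ₁| + |θ₂|) ≤ ω θ₁ θ₂ := by
  -- `ω = 1 - F(θ₁) F(θ₂)` with `F = ∑ cellMass k exp (2πikθ)`, and `|F(θ)| ≤ 1 - |θ|/8`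
  refine ⟨1/16, by norm_num, fun θ₁ h₁ θ₂ h₂ => ?_⟩
  have hsinc : ∀ s : ℝ, (if s = 0 then 1 else Real.sin (π * s) / (π * s)) = sinc (π * s) := by
    intro s
    simp [sinc, Real.pi_ne_zero]
  have hI' : ∀ n, I n = cellMass n.1 * cellMass n.2 := by
    intro n
    rw [hI, hS₀, ← integral_cell_eq_s9]
    simp_rw [hK, hsinc]
  have ha : ∀ n, a n = (if n = 0 then 1 else 0) - cellMass n.1 * cellMass n.2 := by
    intro n
    by_cases h : n = 0
    · subst h; rw [ha0, hI', if_pos rfl]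
    · rw [han n h, hI', if_neg h, zero_sub]
  set F : ℝ → ℂ := fun θ => ∑' k : ℤ, (cellMass k : ℂ) * chr θ k with hF
  have hs₁ := summable_mul_chr summable_cellMass θ₁
  have hs₂ := summable_mul_chr summable_cellMass θ₂
  have hprod : HasSum (fun n : ℤ × ℤ => ((cellMass n.1 : ℂ) * chr θ₁ n.1) *
      ((cellMass n.2 : ℂ) * chr θ₂ n.2)) (F θ₁ * F θ₂) := by
    rw [hF]
    simp only
    rw [tsum_mul_tsum_of_summable_norm hs₁ hs₂]
    exact (summable_mul_of_summable_norm hs₁ hs₂).hasSum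
  have hsum : HasSum (fun n : ℤ × ℤ => (a n : ℂ) *
      Complex.exp (2 * Real.pi * Complex.I * ((n.1 : ℂ) * θ₁ + (n.2 : ℂ) * θ₂)))
      (1 - F θ₁ * F θ₂) := by
    have hd := (hasSum_ite_eq (0 : ℤ × ℤ) (1 : ℂ)).sub hprod
    refine Eq.mp (congrArg (fun f => HasSum f _) (funext fun n => Eq.symm ?_)) hd
    have he : Complex.exp (2 * Real.pi * Complex.I * ((n.1 : ℂ) * θ₁ + (n.2 : ℂ) * θ₂))
        = chr θ₁ n.1 * chr θ₂ n.2 := by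
      unfold chr
      rw [← Complex.exp_add]; congr 1; ring
    rw [he, ha]
    split_ifs with h
    · subst h; simp [chr]
    · push_cast; ring
  rw [hω, hsum.tsum_eq, Complex.sub_re, Complex.one_re]
  have b₁ : ‖F θ₁‖ ≤ 1 - |θ₁| / 8 := norm_tsum_cellMass_le' h₁
  have b₂ : ‖F θ₂‖ ≤ 1 - |θ₂| / 8 := norm_tsum_cellMass_le' h₂
  have hre : (F θ₁ * F θ₂).re ≤ (1 - |θ₁| / 8) * (1 - |θ₂| / 8) := by
    refine (Complex.re_le_norm _).trans ?_
    rw [norm_mul]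
    exact mul_le_mul b₁ b₂ (norm_nonneg _) ((norm_nonneg _).trans b₁)
  have t₁ : |θ₁| ≤ 1/2 := abs_le.2 ⟨h₁.1.le, h₁.2.le⟩
  have t₂ : |θ₂| ≤ 1/2 := abs_le.2 ⟨h₂.1.le, h₂.2.le⟩
  nlinarith [abs_nonneg θ₁, abs_nonneg θ₂]
end

section
/- Let K_S(x, y) = (sin(π(x_1−y_1))/(π(x_1−y_1)))·(sin(π(x_2−y_2))/(π(x_2−y_2))) for x, y ∈ ℝ² (with sin(πt)/(πt) = 1 at t = 0), and for n = (n_1, n_2) ∈ ℤ² let S_n = S_0 × (n + S_0) with S_0 = [−1/2, 1/2)². Then there exist constants c, C > 0 such that for every n ∈ ℤ² \ {0}: c/((1+n_1²)(1+n_2²)) ≤ ∫_{S_n} |K_S(x,y)|² dx dy ≤ C/((1+n_1²)(1+n_2²)). -/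
open MeasureTheory Complex Real ENNReal

/-!
Since the integrand factors through `sinc (π t)` with `t = x₁ - y₁` and `t = x₂ - y₂`, it suffices to
bound `sinc (π t) ^ 2` pointwise.

* Upper bound: `sinc u ^ 2 ≤ 2 / (1 + u ^ 2)`, and `|t - m| ≤ 1` makes `1 + t ^ 2` comparable to
  `1 + m ^ 2` (`sinc_sq_le`). The domain of integration has measure `1`.
* Lower bound: on the positive-measure part of the domain where `x - (y - m) ∈ [1/4, 3/4]` in each
  coordinate, periodicity gives `sin (π t) ^ 2 ≥ 1/2`, while `|t| ≤ |m| + 1` (`le_sinc_sq`). The size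
  of that part does not depend on `n`, and the integrand is nonnegative elsewhere.

Both bounds hold for every `n`, including `n = 0`.
-/

theorem sinc_sq_le (t m : ℝ) (h : |t - m| ≤ 1) : sinc (π * t) ^ 2 ≤ 6 / (1 + m ^ 2) := by
  have h2 := abs_le.1 h
  have hm : 1 + m ^ 2 ≤ 3 * (1 + t ^ 2) := by
    nlinarith [sq_nonneg (2 * t - m), mul_nonneg (sub_nonneg.2 h2.2) (by linarith : 0 ≤ t - m + 1)]
  have h1 : sinc (π * t) ^ 2 ≤ 1 := by
    rw [sq_le_one_iff_abs_le_one]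
    exact abs_le.2 ⟨neg_one_le_sinc _, sinc_le_one _⟩
  have h3 : sinc (π * t) ^ 2 * t ^ 2 ≤ 1 := by
    rcases eq_or_ne t 0 with rfl | ht
    · simp
    have hu : sinc (π * t) * (π * t) = Real.sin (π * t) := by
      rw [sinc_of_ne_zero (mul_ne_zero pi_ne_zero ht)]
      field_simp
    have hs : sinc (π * t) ^ 2 * t ^ 2 * π ^ 2 ≤ 1 := by
      have := Real.sin_sq_le_one (π * t)
      rw [← hu] at this
      linarith
    have hp : 1 ≤ π ^ 2 := by nlinarith [pi_gt_three]
    nlinarith [mul_nonneg (sq_nonneg (sinc (π * t))) (sq_nonneg t)]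
  rw [le_div_iff₀ (by positivity)]
  nlinarith [mul_le_mul_of_nonneg_left hm (sq_nonneg (sinc (π * t)))]

/-- Away from the integers `sin (π t) ^ 2` is bounded below, so `sinc (π t) ^ 2` decays no faster
than `1 / (1 + m ^ 2)`. -/
theorem le_sinc_sq (s : ℝ) (m : ℤ) (h : s ∈ Set.Icc (1 / 4 : ℝ) (3 / 4)) :
    1 / 64 / (1 + (m : ℝ) ^ 2) ≤ sinc (π * (s - m)) ^ 2 := by
  obtain ⟨ha, hb⟩ := h
  have hsin : 1 / 2 ≤ Real.sin (π * (s - m)) ^ 2 := by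
    have hc : Real.cos (2 * (π * (s - m))) ≤ 0 := by
      have : 2 * (π * (s - m)) = 2 * π * s - m * (2 * π) := by ring
      rw [this, Real.cos_sub_int_mul_two_pi]
      apply Real.cos_nonpos_of_pi_div_two_le_of_le <;> nlinarith [pi_pos]
    rw [Real.sin_sq_eq_half_sub]
    linarith
  have ht : π * (s - m) ≠ 0 := by
    intro h0
    rw [h0] at hsin
    norm_num at hsin
  have hu : (π * (s - m)) ^ 2 ≤ 32 * (1 + (m : ℝ) ^ 2) := by
    have h1 : (s - m) ^ 2 ≤ 2 * (1 + (m : ℝ) ^ 2) := by nlinarith [sq_nonneg (s + m)]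
    have h2 : π ^ 2 ≤ 16 := by nlinarith [pi_pos, pi_le_four]
    rw [mul_pow]
    nlinarith [mul_le_mul h2 h1 (sq_nonneg _) (by norm_num)]
  rw [sinc_of_ne_zero ht, div_pow, div_div, div_le_div_iff₀ (by positivity) (by positivity)]
  nlinarith

theorem const_mul_le_setIntegral {f : ℝ × ℝ → ℝ} {s A : Set (ℝ × ℝ)} {c : ℝ}
    (hf : IntegrableOn f s) (h0 : ∀ x, 0 ≤ f x) (hAs : A ⊆ s) (hA : MeasurableSet A)
    (hfin : volume A ≠ ∞) (hc : ∀ x ∈ A, c ≤ f x) : c * volume.real A ≤ ∫ x in s, f x :=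
  (setIntegral_ge_of_const_le_real hA hfin hc (hf.mono_set hAs)).trans
    (setIntegral_mono_set hf (ae_of_all _ h0) hAs.eventuallyLE)

theorem volume_Ico_prod (a b c d : ℝ) :
    volume (Set.Ico a b ×ˢ Set.Ico c d) = ENNReal.ofReal (b - a) * ENNReal.ofReal (d - c) := by
  rw [Measure.volume_eq_prod, Measure.prod_prod, Real.volume_Ico, Real.volume_Ico]

theorem volume_Ico_prod_ne_top (a b c d : ℝ) : volume (Set.Ico a b ×ˢ Set.Ico c d) ≠ ∞ := by
  rw [volume_Ico_prod]
  exact ENNReal.mul_ne_top ENNReal.ofReal_ne_top ENNReal.ofReal_ne_top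

theorem volume_real_Ico_prod {a b c d : ℝ} (h : a ≤ b) (h' : c ≤ d) :
    volume.real (Set.Ico a b ×ˢ Set.Ico c d) = (b - a) * (d - c) := by
  rw [measureReal_def, volume_Ico_prod, ENNReal.toReal_mul, ENNReal.toReal_ofReal (by linarith),
    ENNReal.toReal_ofReal (by linarith)]

theorem image_shift_unit_square (a b : ℝ) :
    (fun z : ℝ × ℝ => (a + z.1, b + z.2)) ''
      (Set.Ico (-(1/2) : ℝ) (1/2) ×ˢ Set.Ico (-(1/2) : ℝ) (1/2)) =
    Set.Ico (a - 1/2) (a + 1/2) ×ˢ Set.Ico (b - 1/2) (b + 1/2) := by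
  ext ⟨u, v⟩
  simp only [Set.mem_image, Set.mem_prod, Set.mem_Ico, Prod.exists, Prod.mk.injEq]
  constructor
  · rintro ⟨p, q, ⟨⟨h1, h2⟩, h3, h4⟩, rfl, rfl⟩
    refine ⟨⟨?_, ?_⟩, ?_, ?_⟩ <;> linarith
  · rintro ⟨⟨h1, h2⟩, h3, h4⟩
    refine ⟨u - a, v - b, ⟨⟨?_, ?_⟩, ?_, ?_⟩, ?_, ?_⟩ <;> linarith

/-- For the tensor square `K_S` of the Dyson sine kernel on `ℝ²` and the sets
`S_n = S₀ × (n + S₀)` with `S₀ = [−1/2,1/2)²`, there are constants `c, C > 0` such that for all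
`n ∈ ℤ² \ {0}`, `c/((1+n₁²)(1+n₂²)) ≤ ∫_{S_n} |K_S(x,y)|² dx dy ≤ C/((1+n₁²)(1+n₂²))`. -/
theorem sine_kernel_square_covariance_bounds
    (K : ℝ × ℝ → ℝ × ℝ → ℝ)
    (hK : ∀ x y : ℝ × ℝ, K x y =
      (if x.1 - y.1 = 0 then 1 else Real.sin (Real.pi * (x.1 - y.1)) / (Real.pi * (x.1 - y.1))) *
      (if x.2 - y.2 = 0 then 1 else Real.sin (Real.pi * (x.2 - y.2)) / (Real.pi * (x.2 - y.2))))
    (S₀ : Set (ℝ × ℝ)) (hS₀ : S₀ = Set.Ico (-(1/2) : ℝ) (1/2) ×ˢ Set.Ico (-(1/2) : ℝ) (1/2))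
    (I : ℤ × ℤ → ℝ)
    (hI : ∀ n : ℤ × ℤ, I n =
      ∫ x in S₀, ∫ y in (fun z : ℝ × ℝ => ((n.1 : ℝ) + z.1, (n.2 : ℝ) + z.2)) '' S₀, (K x y) ^ 2) :
    ∃ c C : ℝ, 0 < c ∧ 0 < C ∧ ∀ n : ℤ × ℤ, n ≠ 0 →
      c / ((1 + (n.1 : ℝ) ^ 2) * (1 + (n.2 : ℝ) ^ 2)) ≤ I n ∧
      I n ≤ C / ((1 + (n.1 : ℝ) ^ 2) * (1 + (n.2 : ℝ) ^ 2)) := by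
  have hK' : ∀ x y, K x y = sinc (π * (x.1 - y.1)) * sinc (π * (x.2 - y.2)) := by
    intro x y
    simp only [hK, sinc, mul_eq_zero, pi_ne_zero, false_or]
  have hcont : Continuous fun p : (ℝ × ℝ) × (ℝ × ℝ) => (K p.1 p.2) ^ 2 := by
    simp only [hK']
    have := continuous_sinc
    fun_prop
  refine ⟨1 / 64 * (1 / 64) * (1 / 16) * (1 / 16), 36, by norm_num, by norm_num, ?_⟩
  intro n _
  rw [hI, hS₀, image_shift_unit_square]
  set S := Set.Ico (-(1/2) : ℝ) (1/2) ×ˢ Set.Ico (-(1/2) : ℝ) (1/2) with hS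
  set T := Set.Ico ((n.1 : ℝ) - 1/2) (n.1 + 1/2) ×ˢ Set.Ico ((n.2 : ℝ) - 1/2) (n.2 + 1/2) with hT
  have hSfin : volume S ≠ ∞ := volume_Ico_prod_ne_top _ _ _ _
  have hTfin : volume T ≠ ∞ := volume_Ico_prod_ne_top _ _ _ _
  have hSm : MeasurableSet S := measurableSet_Ico.prod measurableSet_Ico
  have hTm : MeasurableSet T := measurableSet_Ico.prod measurableSet_Ico
  have hS1 : volume.real S = 1 := by
    rw [hS, volume_real_Ico_prod (by norm_num) (by norm_num)]; norm_num
  have hT1 : volume.real T = 1 := by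
    rw [hT, volume_real_Ico_prod (by linarith) (by linarith)]; ring
  set a : ℝ := 1 + (n.1 : ℝ) ^ 2 with ha
  set b : ℝ := 1 + (n.2 : ℝ) ^ 2 with hb
  have ha0 : 0 < a := by positivity
  have hb0 : 0 < b := by positivity
  have hup : ∀ x ∈ S, ∀ y ∈ T, ‖(K x y) ^ 2‖ ≤ 6 / a * (6 / b) := by
    rintro x ⟨⟨h1, h2⟩, h3, h4⟩ y ⟨⟨h5, h6⟩, h7, h8⟩
    rw [Real.norm_of_nonneg (sq_nonneg _), hK', mul_pow]
    -- The difference `x - y` lies within `1` of `-n` in each coordinate.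
    have e1 := sinc_sq_le (x.1 - y.1) (-n.1) (by rw [abs_le]; constructor <;> linarith)
    have e2 := sinc_sq_le (x.2 - y.2) (-n.2) (by rw [abs_le]; constructor <;> linarith)
    rw [neg_sq] at e1 e2
    exact mul_le_mul e1 e2 (sq_nonneg _) (by positivity)
  have hin : ∀ x ∈ S, ‖∫ y in T, (K x y) ^ 2‖ ≤ 6 / a * (6 / b) := by
    intro x hx
    have := norm_setIntegral_le_of_norm_le_const hTfin.lt_top (hup x hx)
    rwa [hT1, mul_one] at this
  have hF0 : ∀ x, 0 ≤ ∫ y in T, (K x y) ^ 2 := fun x => integral_nonneg fun y => sq_nonneg _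
  have hFint : IntegrableOn (fun x => ∫ y in T, (K x y) ^ 2) S := by
    refine Measure.integrableOn_of_bounded (M := 6 / a * (6 / b)) hSfin ?_
      ((ae_restrict_iff' hSm).2 (ae_of_all _ hin))
    exact (hcont.stronglyMeasurable.integral_prod_right
      (ν := volume.restrict T)).aestronglyMeasurable
  constructor
  · set A := Set.Ico (1/4 : ℝ) (1/2) ×ˢ Set.Ico (1/4 : ℝ) (1/2) with hA
    set B := Set.Ico ((n.1 : ℝ) - 1/4) n.1 ×ˢ Set.Ico ((n.2 : ℝ) - 1/4) n.2 with hB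
    have hA1 : volume.real A = 1 / 16 := by
      rw [hA, volume_real_Ico_prod (by norm_num) (by norm_num)]; norm_num
    have hB1 : volume.real B = 1 / 16 := by
      rw [hB, volume_real_Ico_prod (by linarith) (by linarith)]; ring
    have hAS : A ⊆ S := Set.prod_mono (Set.Ico_subset_Ico (by norm_num) le_rfl)
      (Set.Ico_subset_Ico (by norm_num) le_rfl)
    have hBT : B ⊆ T := Set.prod_mono (Set.Ico_subset_Ico (by linarith) (by linarith))
      (Set.Ico_subset_Ico (by linarith) (by linarith))
    have hlow : ∀ x ∈ A, ∀ y ∈ B, 1 / 64 / a * (1 / 64 / b) ≤ (K x y) ^ 2 := by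
      rintro x ⟨⟨h1, h2⟩, h3, h4⟩ y ⟨⟨h5, h6⟩, h7, h8⟩
      have e1 := le_sinc_sq (x.1 - y.1 + n.1) n.1 ⟨by linarith, by linarith⟩
      have e2 := le_sinc_sq (x.2 - y.2 + n.2) n.2 ⟨by linarith, by linarith⟩
      rw [add_sub_cancel_right] at e1 e2
      rw [hK', mul_pow]
      exact mul_le_mul e1 e2 (by positivity) (sq_nonneg _)
    have hFlow : ∀ x ∈ A, 1 / 64 / a * (1 / 64 / b) * (1 / 16) ≤ ∫ y in T, (K x y) ^ 2 := by
      intro x hx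
      have hint : IntegrableOn (fun y => (K x y) ^ 2) T := by
        refine Measure.integrableOn_of_bounded hTfin ?_
          ((ae_restrict_iff' hTm).2 (ae_of_all _ (hup x (hAS hx))))
        exact (hcont.comp (Continuous.prodMk_right x)).aestronglyMeasurable
      have := const_mul_le_setIntegral hint (fun y => sq_nonneg _) hBT
        (measurableSet_Ico.prod measurableSet_Ico) (volume_Ico_prod_ne_top _ _ _ _) (hlow x hx)
      rwa [hB1] at this
    have := const_mul_le_setIntegral hFint hF0 hAS
      (measurableSet_Ico.prod measurableSet_Ico) (volume_Ico_prod_ne_top _ _ _ _) hFlow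
    rw [hA1] at this
    refine le_of_eq_of_le ?_ this
    field_simp
  · have := norm_setIntegral_le_of_norm_le_const hSfin.lt_top hin
    rw [hS1, mul_one] at this
    refine (le_abs_self _).trans (this.trans_eq ?_)
    field_simp
    norm_num
end

section
/- Let (a_k)_{k∈ℤ} be real numbers with ∑_{k∈ℤ} |a_k| < ∞, a_{−k} = a_k for all k, ∑_{k∈ℤ} a_k = 0, and suppose there is c > 0 such that a_k < 0 and |a_k| ≥ c/(1+k²) for all k ≠ 0. Then there exists c' > 0 such that the function φ(θ) = ∑_{k∈ℤ} a_k e^{2πi k θ} satisfies φ(θ) ≥ c'|θ| for all θ ∈ (−1/2, 1/2). -/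
/-!
Taking real parts and subtracting `∑ a_k = 0` gives `φ(θ) = ∑_k (-a_k)(1 - cos(2πkθ))`, a series of
nonnegative terms (the `k = 0` term vanishes). Keeping only `k ≥ 1` and using
`-a_k ≥ c/(1+k²) ≥ c/(2k²)`, the series dominates `(c/2) ∑_{k≥1} (1 - cos(2πkθ))/k²`. By the Fourier
series of the second Bernoulli polynomial this last sum is `π²|θ|(1-|θ|)` for `|θ| ≤ 1`, which is
at least `π²|θ|/2` when `|θ| ≤ 1/2`; hence `c' = cπ²/4` works. (The Bernoulli polynomial plays the
role of the triangle-wave expansion of `|θ|`.)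
-/

/-- The Fourier series of the second Bernoulli polynomial, normalised to vanish at `0`.
The `n = 0` term is `0`, since `1 / 0 = 0`. -/
theorem hasSum_one_sub_cos_div_sq {x : ℝ} (hx : x ∈ Set.Icc (0 : ℝ) 1) :
    HasSum (fun n : ℕ => 1 / (n : ℝ) ^ 2 * (1 - Real.cos (2 * Real.pi * n * x)))
      (Real.pi ^ 2 * (x * (1 - x))) := by
  have h := hasSum_one_div_nat_pow_mul_cos one_ne_zero hx
  have h2 := hasSum_zeta_two.sub h
  convert! h2 using 1
  · ext n
    ring
  · have hB : (Polynomial.map (algebraMap ℚ ℝ) (Polynomial.bernoulli 2)).eval x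
        = x ^ 2 - x + 6⁻¹ := bernoulliFun_two x
    rw [mul_one, hB]
    norm_num [Nat.factorial]
    ring

theorem fourier_series_linear_lower_bound
    (a : ℤ → ℝ) (hsum : Summable fun k => |a k|)
    (hsym : ∀ k : ℤ, a (-k) = a k) (hzero : ∑' k : ℤ, a k = 0)
    (c : ℝ) (hc : 0 < c)
    (hneg : ∀ k : ℤ, k ≠ 0 → a k < 0 ∧ c / (1 + (k : ℝ) ^ 2) ≤ |a k|)
    (φ : ℝ → ℝ)
    (hφ : ∀ θ : ℝ, φ θ = (∑' k : ℤ,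
      (a k : ℂ) * Complex.exp (2 * Real.pi * Complex.I * (k : ℂ) * θ)).re) :
    ∃ c' : ℝ, 0 < c' ∧ ∀ θ ∈ Set.Ioo (-(1/2) : ℝ) (1/2), c' * |θ| ≤ φ θ := by
  refine ⟨c * Real.pi ^ 2 / 4, by positivity, fun θ hθ => ?_⟩
  have hexp : ∀ k : ℤ, Complex.exp (2 * Real.pi * Complex.I * (k : ℂ) * θ)
      = Complex.exp ((2 * Real.pi * k * θ : ℝ) * Complex.I) := fun k => by
    congr 1
    push_cast
    ring
  have hS : Summable fun k : ℤ =>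
      (a k : ℂ) * Complex.exp (2 * Real.pi * Complex.I * (k : ℂ) * θ) := by
    refine Summable.of_norm (hsum.congr fun k => ?_)
    rw [hexp, norm_mul, Complex.norm_exp_ofReal_mul_I, mul_one, Complex.norm_real,
      Real.norm_eq_abs]
  have hφsum : HasSum (fun k : ℤ => a k * Real.cos (2 * Real.pi * k * θ)) (φ θ) := by
    rw [hφ]
    convert! Complex.hasSum_re hS.hasSum using 1
    ext k
    rw [hexp, Complex.re_ofReal_mul, Complex.exp_ofReal_mul_I_re]
  have h0 : HasSum a 0 := hzero ▸ (summable_abs_iff.mp hsum).hasSum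
  have hmain : HasSum (fun k : ℤ => -a k * (1 - Real.cos (2 * Real.pi * k * θ))) (φ θ) := by
    convert! hφsum.sub h0 using 1
    · ext k
      ring
    · ring
  have habs : |θ| ≤ 1 / 2 := (abs_lt.mpr ⟨hθ.1, hθ.2⟩).le
  have hlow := (hasSum_one_sub_cos_div_sq (x := |θ|)
    ⟨abs_nonneg θ, by linarith⟩).mul_left (c / 2)
  have hle : c / 2 * (Real.pi ^ 2 * (|θ| * (1 - |θ|))) ≤ φ θ := by
    refine hasSum_le_inj (fun n : ℕ => (n : ℤ)) Nat.cast_injective ?_ ?_ hlow hmain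
    · intro k hk
      have hk0 : k ≠ 0 := fun h => hk ⟨0, by simp [h]⟩
      exact mul_nonneg (neg_nonneg.mpr (hneg k hk0).1.le) (sub_nonneg.mpr (Real.cos_le_one _))
    · intro n
      rcases Nat.eq_zero_or_pos n with rfl | hn
      · simp
      have hcos : Real.cos (2 * Real.pi * n * |θ|) = Real.cos (2 * Real.pi * n * θ) := by
        rw [← Real.cos_abs (2 * Real.pi * n * θ), abs_mul, abs_of_nonneg (by positivity :
          (0 : ℝ) ≤ 2 * Real.pi * n)]
      have hn1 : (1 : ℝ) ≤ n := by exact_mod_cast hn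
      obtain ⟨h1, h2⟩ := hneg n (by exact_mod_cast hn.ne')
      rw [abs_of_neg h1, Int.cast_natCast] at h2
      -- `1 + n² ≤ 2n²` for `n ≥ 1`
      have h3 : c / 2 * (1 / (n : ℝ) ^ 2) ≤ c / (1 + (n : ℝ) ^ 2) := by
        rw [div_mul_div_comm, mul_one]
        exact div_le_div_of_nonneg_left hc.le (by positivity) (by nlinarith)
      rw [hcos, ← mul_assoc, Int.cast_natCast]
      exact mul_le_mul_of_nonneg_right (h3.trans h2) (sub_nonneg.mpr (Real.cos_le_one _))
  refine le_trans ?_ hle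
  have : 0 ≤ c * Real.pi ^ 2 * (|θ| * (1 / 2 - |θ|)) :=
    mul_nonneg (by positivity) (mul_nonneg (abs_nonneg θ) (by linarith))
  linarith
end
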